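/- arXiv:1907.10531 — 2 statements merged into one kernel-verified Lean document; each statement's English description precedes it below -/
import Mathlib

section
/- Let F : ℝ → ℝ≥0 be log-concave and f₁, f₂, f₃, f₄ : [a,b] → ℝ≥0 continuous, α, β > 0. If for every subinterval [a',b'] ⊆ [a,b] and every real δ one has (∫_{a'}^{b'} e^{δt} f₁ dt)^α (∫_{a'}^{b'} e^{δt} f₂ dt)^β ≤ (∫_{a'}^{b'} e^{δt} f₃ dt)^α (∫_{a'}^{b'} e^{δt} f₄ dt)^β, then (∫_a^b F f₁ dt)^α (∫_a^b F f₂ dt)^β ≤ (∫_a^b F f₃ dt)^α (∫_a^b F f₄ dt)^β. -/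
open MeasureTheory Real Set
open Filter Function
open scoped Topology

/-!
If the inequality fails for `F`, there are scalars `r, s > 0` with `1 ≤ r ^ α * s ^ β` such that
`g = f₁ - r f₃` and `h = f₂ - s f₄` both have positive integral against `F`. Conversely, an
exponential weight on a subinterval against which `g` and `h` have positive integral violates the
hypothesis. So it suffices to pass from a log-concave weight to an exponential one while keeping two
integrals positive, which is the localization lemma of Lovász and Simonovits.

After sampling `F` along a fine uniform partition this concerns log-concave weights on
`{0, …, n - 1}`, and the argument is that of Fradelizi and Guédon. Among the normalized weights for
which the sum of `h` is at least its original value, maximize the sum of `g`; by Krein–Milman the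
maximum is attained at an extreme point `x`. If `x m * x (m + 2) < x (m + 1) ^ 2` inside the
support, then `x` can be multiplied by `1 ± ε w` for all affine sequences `w` with a kink at
`m + 1`. These form a three-dimensional space and there are only two linear constraints, which
contradicts extremality. Hence `x` is geometric on an interval of indices, and a geometric sequence
is the sequence of cell integrals of an exponential, up to a constant factor.
-/

section ExtremePoints

variable {E : Type*} [AddCommGroup E] [Module ℝ E]

lemma exists_mem_extremePoints_isMaxOn [TopologicalSpace E] [T2Space E]
    [IsTopologicalAddGroup E] [ContinuousSMul ℝ E] [LocallyConvexSpace ℝ E] {K : Set E}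
    (hK : IsCompact K) (hne : K.Nonempty) (L : E →L[ℝ] ℝ) :
    ∃ x ∈ K.extremePoints ℝ, IsMaxOn L K x := by
  have hface : IsExposed ℝ K (L.toExposed K) := ContinuousLinearMap.toExposed.isExposed
  obtain ⟨z, hz, hmax⟩ := hK.exists_isMaxOn hne L.continuous.continuousOn
  obtain ⟨x, hx⟩ := (hface.isCompact hK).extremePoints_nonempty ⟨z, hz, hmax⟩
  exact ⟨x, hface.isExtreme.extremePoints_subset_extremePoints hx, hx.1.2⟩

lemma eq_zero_of_mem_extremePoints {K : Set E} {x u : E} (hx : x ∈ K.extremePoints ℝ)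
    (hu : ∀ᶠ ε in 𝓝 (0 : ℝ), x + ε • u ∈ K) : u = 0 := by
  obtain ⟨ε, hε, hball⟩ := Metric.eventually_nhds_iff.1 hu
  have hplus : x + (ε / 2) • u ∈ K := hball (by simp [abs_of_pos hε, hε])
  have hminus : x + (-(ε / 2)) • u ∈ K := hball (by simp [abs_of_pos hε, hε])
  have hmid : x ∈ openSegment ℝ (x + (ε / 2) • u) (x + (-(ε / 2)) • u) :=
    ⟨1 / 2, 1 / 2, by norm_num, by norm_num, by norm_num, by module⟩
  simpa [hε.ne'] using (mem_extremePoints.1 hx).2 _ hplus _ hminus hmid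

end ExtremePoints

lemma exists_ne_zero_apply_eq_zero_apply_eq_zero {𝕜 V : Type*} [Field 𝕜] [AddCommGroup V]
    [Module 𝕜 V] (hV : 2 < Module.finrank 𝕜 V) (p q : V →ₗ[𝕜] 𝕜) :
    ∃ v ≠ 0, p v = 0 ∧ q v = 0 := by
  have : FiniteDimensional 𝕜 V := .of_finrank_pos (by omega)
  have hker : LinearMap.ker (p.prod q) ≠ ⊥ := LinearMap.ker_ne_bot_of_finrank_lt (by simpa using hV)
  obtain ⟨v, hv, hv0⟩ := Submodule.exists_mem_ne_zero_of_ne_bot hker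
  exact ⟨v, hv0, by simpa using hv⟩

/-! ### Log-concave sequences -/

/-- Log-concavity of a sequence of nonnegative reals. Comparing `x i * x (j + 2)` for all `i ≤ j`,
rather than for `i = j` only, forces the support to be an interval, and it is a closed condition. -/
structure IsLogConcaveSeq (x : ℕ → ℝ) : Prop where
  nonneg (i : ℕ) : 0 ≤ x i
  mul_le_mul {i j : ℕ} (hij : i ≤ j) : x i * x (j + 2) ≤ x (i + 1) * x (j + 1)

namespace IsLogConcaveSeq

variable {x : ℕ → ℝ}

lemma succ_pos (hx : IsLogConcaveSeq x) {i j : ℕ} (hij : i < j) (hi : 0 < x i) (hj : 0 < x j) :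
    0 < x (i + 1) := by
  obtain rfl | ⟨k, rfl, hik⟩ : j = i + 1 ∨ ∃ k, j = k + 2 ∧ i ≤ k := by
    rcases Nat.lt_iff_add_one_le.1 hij |>.eq_or_lt with h | h
    · exact .inl h.symm
    · exact .inr ⟨j - 2, by omega, by omega⟩
  · exact hj
  · exact pos_of_mul_pos_left ((mul_pos hi hj).trans_le (hx.mul_le_mul hik)) (hx.nonneg _)

lemma ordConnected_support (hx : IsLogConcaveSeq x) : (support x).OrdConnected := by
  have hpos {i : ℕ} (hi : i ∈ support x) : 0 < x i := (hx.nonneg i).lt_of_ne' hi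
  refine ⟨fun i hi j hj k ⟨hik, hkj⟩ ↦ ?_⟩
  suffices 0 < x k from this.ne'
  clear * - hx hpos hi hj hik hkj
  induction k, hik using Nat.le_induction with
  | base => exact hpos hi
  | succ k _ ih => exact hx.succ_pos hkj (ih (by omega)) (hpos hj)

lemma of_ordConnected_support (hnonneg : ∀ i, 0 ≤ x i) (hsupp : (support x).OrdConnected)
    (hsq : ∀ i, x i * x (i + 2) ≤ x (i + 1) ^ 2) : IsLogConcaveSeq x := by
  refine ⟨hnonneg, fun {i j} hij ↦ ?_⟩
  induction j, hij using Nat.le_induction with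
  | base => simpa [sq] using hsq i
  | succ j hij ih =>
    by_cases hends : x i ≠ 0 ∧ x (j + 3) ≠ 0
    · have hpos {k : ℕ} (hik : i ≤ k) (hkj : k ≤ j + 3) : 0 < x k :=
        (hnonneg k).lt_of_ne' (hsupp.out hends.1 hends.2 ⟨hik, hkj⟩)
      have hmid : 0 < x (j + 1) * x (j + 2) := mul_pos (hpos (by omega) (by omega))
        (hpos (by omega) (by omega))
      refine le_of_mul_le_mul_right ?_ hmid
      calc x i * x (j + 3) * (x (j + 1) * x (j + 2))
          = x i * x (j + 2) * (x (j + 1) * x (j + 3)) := by ring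
        _ ≤ x (i + 1) * x (j + 1) * x (j + 2) ^ 2 :=
          _root_.mul_le_mul ih (hsq (j + 1)) (mul_nonneg (hnonneg _) (hnonneg _))
            (mul_nonneg (hnonneg _) (hnonneg _))
        _ = x (i + 1) * x (j + 2) * (x (j + 1) * x (j + 2)) := by ring
    · have hzero : x i * x (j + 3) = 0 := by grind
      exact hzero.trans_le (mul_nonneg (hnonneg _) (hnonneg _))

lemma indicator_Iio (hx : IsLogConcaveSeq x) (n : ℕ) :
    IsLogConcaveSeq ((Iio n).indicator x) := by
  have hnonneg := indicator_nonneg (s := Iio n) fun i _ ↦ hx.nonneg i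
  refine ⟨hnonneg, fun {i j} hij ↦ ?_⟩
  by_cases hj : j + 2 < n
  · simpa [indicator, hj, show i < n by omega, show i + 1 < n by omega,
      show j + 1 < n by omega] using hx.mul_le_mul hij
  · simpa [hj] using mul_nonneg (hnonneg (i + 1)) (hnonneg (j + 1))

lemma const_smul (hx : IsLogConcaveSeq x) {c : ℝ} (hc : 0 ≤ c) : IsLogConcaveSeq (c • x) := by
  refine ⟨fun i ↦ mul_nonneg hc (hx.nonneg i), fun hij ↦ ?_⟩
  simpa [mul_mul_mul_comm] using mul_le_mul_of_nonneg_left (hx.mul_le_mul hij) (mul_self_nonneg c)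

lemma isClosed_setOf : IsClosed {x : ℕ → ℝ | IsLogConcaveSeq x} := by
  have heq : {x : ℕ → ℝ | IsLogConcaveSeq x} = {x | ∀ i, 0 ≤ x i} ∩
      {x | ∀ i j, i ≤ j → x i * x (j + 2) ≤ x (i + 1) * x (j + 1)} :=
    ext fun x ↦ ⟨fun h ↦ ⟨h.nonneg, fun _ _ ↦ h.mul_le_mul⟩, fun h ↦ ⟨h.1, h.2 _ _⟩⟩
  rw [heq]
  simp only [ofPred_forall]
  exact (isClosed_iInter fun i ↦ isClosed_le (by fun_prop) (by fun_prop)).inter <|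
    isClosed_iInter fun i ↦ isClosed_iInter fun j ↦ isClosed_iInter fun _ ↦
      isClosed_le (by fun_prop) (by fun_prop)

lemma mul_of_pos (hx : IsLogConcaveSeq x) {u : ℕ → ℝ} (hu : ∀ i, x i ≠ 0 → 0 < u i)
    (hsq : ∀ i, x i * u i * (x (i + 2) * u (i + 2)) ≤ (x (i + 1) * u (i + 1)) ^ 2) :
    IsLogConcaveSeq fun i ↦ x i * u i := by
  refine of_ordConnected_support (fun i ↦ ?_) ?_ hsq
  · by_cases hi : x i = 0
    · simp [hi]
    · exact mul_nonneg (hx.nonneg i) (hu i hi).le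
  · convert hx.ordConnected_support using 1
    ext i
    simpa using fun hi ↦ (hu i hi).ne'

lemma eventually_add_smul_mul (hx : IsLogConcaveSeq x) {n m : ℕ} (hn : ∀ i ≥ n, x i = 0)
    (hm : x m * x (m + 2) < x (m + 1) ^ 2) {w : ℕ → ℝ}
    (hw : ∀ i ≠ m, w i + w (i + 2) = 2 * w (i + 1)) :
    ∀ᶠ ε in 𝓝 (0 : ℝ), IsLogConcaveSeq (x + ε • (x * w)) := by
  have hfactor : ∀ᶠ ε in 𝓝 (0 : ℝ), ∀ i ∈ Finset.range n, 0 < 1 + ε * w i :=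
    (eventually_all_finset _).2 fun i _ ↦
      continuousAt_const.eventually_lt (g := fun ε : ℝ ↦ 1 + ε * w i) (by fun_prop) (by simp)
  have hstrict : ∀ᶠ ε in 𝓝 (0 : ℝ), x m * (1 + ε * w m) * (x (m + 2) * (1 + ε * w (m + 2))) <
      (x (m + 1) * (1 + ε * w (m + 1))) ^ 2 :=
    ContinuousAt.eventually_lt (f := fun ε : ℝ ↦ x m * (1 + ε * w m) *
      (x (m + 2) * (1 + ε * w (m + 2)))) (by fun_prop) (by fun_prop) (by simpa using hm)
  filter_upwards [hfactor, hstrict] with ε hfactor hstrict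
  have heq : x + ε • (x * w) = fun i ↦ x i * (1 + ε * w i) := by
    ext i
    simp only [Pi.add_apply, Pi.smul_apply, Pi.mul_apply, smul_eq_mul]
    ring
  rw [heq]
  refine hx.mul_of_pos (fun i hi ↦ hfactor i (Finset.mem_range.2 (not_le.1 fun h ↦ hi (hn i h))))
    fun i ↦ ?_
  obtain rfl | hi := eq_or_ne i m
  · exact hstrict.le
  have hamgm : (1 + ε * w i) * (1 + ε * w (i + 2)) ≤ (1 + ε * w (i + 1)) ^ 2 := by
    rw [show w (i + 1) = (w i + w (i + 2)) / 2 by linarith [hw i hi]]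
    nlinarith [sq_nonneg (ε * (w i - w (i + 2)))]
  calc x i * (1 + ε * w i) * (x (i + 2) * (1 + ε * w (i + 2)))
      = x i * x (i + 2) * ((1 + ε * w i) * (1 + ε * w (i + 2))) := by ring
    _ ≤ x i * x (i + 2) * (1 + ε * w (i + 1)) ^ 2 :=
      mul_le_mul_of_nonneg_left hamgm (mul_nonneg (hx.nonneg _) (hx.nonneg _))
    _ ≤ x (i + 1) ^ 2 * (1 + ε * w (i + 1)) ^ 2 :=
      mul_le_mul_of_nonneg_right (by simpa [sq] using hx.mul_le_mul le_rfl) (sq_nonneg _)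
    _ = (x (i + 1) * (1 + ε * w (i + 1))) ^ 2 := by ring

lemma exists_support_eq_Icc (hx : IsLogConcaveSeq x) {n : ℕ} (hn : ∀ i ≥ n, x i = 0)
    (hx0 : x ≠ 0) : ∃ k l, k ≤ l ∧ support x = Icc k l := by
  have hne : (support x).Nonempty := support_nonempty_iff.2 hx0
  have hbdd : BddAbove (support x) := ⟨n, fun i hi ↦ not_lt.1 fun h ↦ hi (hn i h.le)⟩
  have hleast := Nat.sInf_mem hne
  have hgreatest := Nat.sSup_mem hne hbdd
  refine ⟨_, _, Nat.sInf_le hgreatest, Subset.antisymm (fun i hi ↦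
    ⟨Nat.sInf_le hi, le_csSup hbdd hi⟩) (hx.ordConnected_support.out hleast hgreatest)⟩

end IsLogConcaveSeq

lemma exists_geometric_of_mul_eq_sq {x : ℕ → ℝ} {k l : ℕ} (hpos : ∀ i ∈ Icc k l, 0 < x i)
    (hsq : ∀ i, k ≤ i → i + 2 ≤ l → x i * x (i + 2) = x (i + 1) ^ 2) :
    ∃ C r : ℝ, 0 < r ∧ ∀ i ∈ Icc k l, x i = C * r ^ i := by
  obtain ⟨r, hr, hratio⟩ : ∃ r > 0, ∀ i, k ≤ i → i + 1 ≤ l → x (i + 1) = r * x i := by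
    by_cases hkl : k + 1 ≤ l
    · have hk := hpos k ⟨le_rfl, by omega⟩
      refine ⟨x (k + 1) / x k, div_pos (hpos _ ⟨by omega, hkl⟩) hk, fun i hki ↦ ?_⟩
      induction i, hki using Nat.le_induction with
      | base => intro _; field_simp
      | succ i hki ih =>
        intro hil
        have hi := hpos i ⟨hki, by omega⟩
        refine mul_left_cancel₀ hi.ne' ?_
        rw [hsq i hki hil, sq]
        nth_rw 1 [ih (by omega)]
        ring
    · exact ⟨1, one_pos, fun i _ _ ↦ by omega⟩
  refine ⟨x k / r ^ k, r, hr, fun i hi ↦ ?_⟩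
  obtain ⟨hki, hil⟩ := hi
  induction i, hki using Nat.le_induction with
  | base => field_simp
  | succ i hki ih => rw [hratio i hki hil, ih (by omega)]; ring

/-! ### Localization for log-concave weights -/

/-- The sequences `i ↦ v 0 + i * v 1 + (i - (m + 1)) * v 2`, with truncated subtraction in the last
term: they are affine up to a change of slope at `m + 1`, and serve as directions in which to
perturb a log-concave sequence that is not geometric around `m + 1`. -/
def kink (m : ℕ) : (Fin 3 → ℝ) →ₗ[ℝ] ℕ → ℝ :=
  LinearMap.pi fun i ↦ LinearMap.proj 0 + (i : ℝ) • LinearMap.proj 1 +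
    ((i - (m + 1) : ℕ) : ℝ) • LinearMap.proj 2

lemma kink_apply (m : ℕ) (v : Fin 3 → ℝ) (i : ℕ) :
    kink m v i = v 0 + i * v 1 + (i - (m + 1) : ℕ) * v 2 := rfl

lemma kink_add_kink_of_ne {m i : ℕ} (hi : i ≠ m) (v : Fin 3 → ℝ) :
    kink m v i + kink m v (i + 2) = 2 * kink m v (i + 1) := by
  simp only [kink_apply]
  rcases hi.lt_or_gt with h | h
  · rw [show i - (m + 1) = 0 by omega, show i + 2 - (m + 1) = 0 by omega,
      show i + 1 - (m + 1) = 0 by omega]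
    push_cast
    ring
  · obtain ⟨d, rfl⟩ := Nat.exists_eq_add_of_lt h
    rw [show m + d + 1 - (m + 1) = d by omega, show m + d + 1 + 2 - (m + 1) = d + 2 by omega,
      show m + d + 1 + 1 - (m + 1) = d + 1 by omega]
    push_cast
    ring

lemma eq_zero_of_kink_eq_zero {m : ℕ} {v : Fin 3 → ℝ} (h₀ : kink m v m = 0)
    (h₁ : kink m v (m + 1) = 0) (h₂ : kink m v (m + 2) = 0) : v = 0 := by
  simp only [kink_apply, show m - (m + 1) = 0 by omega, show m + 1 - (m + 1) = 0 by omega,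
    show m + 2 - (m + 1) = 1 by omega] at h₀ h₁ h₂
  push_cast at h₀ h₁ h₂
  have hv₁ : v 1 = 0 := by linarith
  rw [hv₁] at h₀ h₂
  ext i
  fin_cases i <;> simp <;> linarith

/-- The log-concave probability weights on `{0, …, n - 1}` at which the linear functional `L` is at
least `s`: the set over which a second functional is maximized in the localization argument. -/
def logConcaveWeights (n : ℕ) (L : (ℕ → ℝ) →L[ℝ] ℝ) (s : ℝ) : Set (ℕ → ℝ) :=
  {x | IsLogConcaveSeq x ∧ (∀ i ≥ n, x i = 0) ∧ ∑ i ∈ Finset.range n, x i = 1 ∧ s ≤ L x}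

lemma isCompact_logConcaveWeights (n : ℕ) (L : (ℕ → ℝ) →L[ℝ] ℝ) (s : ℝ) :
    IsCompact (logConcaveWeights n L s) := by
  have hcube : IsCompact (univ.pi fun _ : ℕ ↦ Icc (0 : ℝ) 1) :=
    isCompact_univ_pi fun _ ↦ isCompact_Icc
  refine hcube.of_isClosed_subset ?_ fun x ⟨hx, hn, hsum, _⟩ i _ ↦ ⟨hx.nonneg i, ?_⟩
  · have hvanish : IsClosed {x : ℕ → ℝ | ∀ i ≥ n, x i = 0} := by
      simp only [ofPred_forall]
      exact isClosed_iInter fun i ↦ isClosed_iInter fun _ ↦ isClosed_eq (by fun_prop) (by fun_prop)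
    exact IsLogConcaveSeq.isClosed_setOf.inter <| hvanish.inter <|
      (isClosed_eq (by fun_prop) continuous_const).inter
        (isClosed_le continuous_const L.continuous)
  · by_cases hi : i < n
    · exact hsum ▸ Finset.single_le_sum (fun j _ ↦ hx.nonneg j) (Finset.mem_range.2 hi)
    · simp [hn i (not_lt.1 hi)]

/-- Summation over `{0, …, n - 1}` against `φ`, as a continuous functional of the weights. -/
def weightedSum (n : ℕ) (φ : ℕ → ℝ) : (ℕ → ℝ) →L[ℝ] ℝ :=
  ∑ i ∈ Finset.range n, φ i • ContinuousLinearMap.proj i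

lemma weightedSum_apply (n : ℕ) (φ x : ℕ → ℝ) :
    weightedSum n φ x = ∑ i ∈ Finset.range n, x i * φ i := by
  simp [weightedSum, mul_comm]

lemma sq_eq_of_mem_extremePoints {n : ℕ} {L : (ℕ → ℝ) →L[ℝ] ℝ} {s : ℝ} {x : ℕ → ℝ}
    (hx : x ∈ (logConcaveWeights n L s).extremePoints ℝ) {m : ℕ} (hm₀ : 0 < x m)
    (hm₂ : 0 < x (m + 2)) : x m * x (m + 2) = x (m + 1) ^ 2 := by
  obtain ⟨hlc, hn, hsum, hL⟩ := hx.1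
  by_contra hne
  have hstrict : x m * x (m + 2) < x (m + 1) ^ 2 :=
    lt_of_le_of_ne (by simpa [sq] using hlc.mul_le_mul le_rfl) hne
  have hm₁ : 0 < x (m + 1) := hlc.succ_pos (by omega) hm₀ hm₂
  let perturb : (Fin 3 → ℝ) →ₗ[ℝ] ℕ → ℝ := LinearMap.mulLeft ℝ x ∘ₗ kink m
  obtain ⟨v, hv, hvsum, hvL⟩ := exists_ne_zero_apply_eq_zero_apply_eq_zero
    (V := Fin 3 → ℝ) (by simp) ((weightedSum n 1).toLinearMap ∘ₗ perturb)
    (L.toLinearMap ∘ₗ perturb)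
  replace hvsum : ∑ i ∈ Finset.range n, (x * kink m v) i = 0 := by
    simpa [perturb, weightedSum_apply] using hvsum
  replace hvL : L (x * kink m v) = 0 := hvL
  have hmem : ∀ᶠ ε in 𝓝 (0 : ℝ), x + ε • (x * kink m v) ∈ logConcaveWeights n L s := by
    filter_upwards [hlc.eventually_add_smul_mul hn hstrict fun i hi ↦ kink_add_kink_of_ne hi v]
      with ε hε
    refine ⟨hε, fun i hi ↦ by simp [hn i hi], ?_, by simpa [hvL] using hL⟩
    simp only [Pi.add_apply, Pi.smul_apply, smul_eq_mul, Finset.sum_add_distrib, ← Finset.mul_sum,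
      hvsum, hsum, mul_zero, add_zero]
  have hzero : x * kink m v = 0 := eq_zero_of_mem_extremePoints hx hmem
  have hkink {i : ℕ} (hi : 0 < x i) : kink m v i = 0 :=
    (mul_eq_zero.1 (congrFun hzero i)).resolve_left hi.ne'
  exact hv (eq_zero_of_kink_eq_zero (hkink hm₀) (hkink hm₁) (hkink hm₂))

lemma exists_eq_indicator_of_mem_extremePoints {n : ℕ} {L : (ℕ → ℝ) →L[ℝ] ℝ} {s : ℝ} {x : ℕ → ℝ}
    (hx : x ∈ (logConcaveWeights n L s).extremePoints ℝ) :
    ∃ k l, k ≤ l ∧ l ≤ n ∧ ∃ C r : ℝ, 0 < C ∧ 0 < r ∧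
      x = (Ico k l).indicator fun i ↦ C * r ^ i := by
  obtain ⟨hlc, hn, hsum, -⟩ := hx.1
  have hx0 : x ≠ 0 := by rintro rfl; simp at hsum
  obtain ⟨k, l, hkl, hsupp⟩ := hlc.exists_support_eq_Icc hn hx0
  have hpos : ∀ i ∈ Icc k l, 0 < x i := fun i hi ↦ (hlc.nonneg i).lt_of_ne' (hsupp.ge hi)
  obtain ⟨C, r, hr, hgeom⟩ := exists_geometric_of_mul_eq_sq hpos fun i hki hil ↦
    sq_eq_of_mem_extremePoints hx (hpos i ⟨hki, by omega⟩) (hpos _ ⟨by omega, hil⟩)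
  have hkmem : k ∈ Icc k l := ⟨le_rfl, hkl⟩
  have hC : 0 < C := pos_of_mul_pos_left (hgeom k hkmem ▸ hpos k hkmem) (by positivity)
  have hln : l < n := not_le.1 fun h ↦ (hpos l ⟨hkl, le_rfl⟩).ne' (hn l h)
  refine ⟨k, l + 1, by omega, hln, C, r, hC, hr, ?_⟩
  rw [← indicator_support (f := x), hsupp, show Ico k (l + 1) = Icc k l by grind]
  exact indicator_congr hgeom

theorem IsLogConcaveSeq.exists_geometric_sum_pos {n : ℕ} {y g h : ℕ → ℝ} (hy : IsLogConcaveSeq y)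
    (hn : ∀ i ≥ n, y i = 0) (hg : 0 < ∑ i ∈ Finset.range n, y i * g i)
    (hh : 0 < ∑ i ∈ Finset.range n, y i * h i) :
    ∃ k l, k ≤ l ∧ l ≤ n ∧ ∃ r : ℝ, 0 < r ∧ 0 < ∑ i ∈ Finset.Ico k l, r ^ i * g i ∧
      0 < ∑ i ∈ Finset.Ico k l, r ^ i * h i := by
  set T := ∑ i ∈ Finset.range n, y i
  have hT : 0 < T := by
    refine (Finset.sum_nonneg fun i _ ↦ hy.nonneg i).lt_of_ne' fun hT ↦ hg.ne' ?_
    have hzero := (Finset.sum_eq_zero_iff_of_nonneg fun i _ ↦ hy.nonneg i).1 hT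
    exact Finset.sum_eq_zero fun i hi ↦ by rw [hzero i hi, zero_mul]
  rw [← weightedSum_apply] at hg hh
  have hmem : T⁻¹ • y ∈ logConcaveWeights n (weightedSum n h) (T⁻¹ * weightedSum n h y) :=
    ⟨hy.const_smul (inv_nonneg.2 hT.le), fun i hi ↦ by simp [hn i hi],
      by simp [← Finset.mul_sum, T, inv_mul_cancel₀ hT.ne'], by simp⟩
  obtain ⟨x, hx, hmax⟩ := exists_mem_extremePoints_isMaxOn (isCompact_logConcaveWeights _ _ _)
    ⟨_, hmem⟩ (weightedSum n g)
  have hxg : 0 < weightedSum n g x := by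
    refine lt_of_lt_of_le ?_ (hmax hmem)
    simpa using mul_pos (inv_pos.2 hT) hg
  have hxh : 0 < weightedSum n h x := (mul_pos (inv_pos.2 hT) hh).trans_le hx.1.2.2.2
  obtain ⟨k, l, hkl, hln, C, r, hC, hr, rfl⟩ := exists_eq_indicator_of_mem_extremePoints hx
  have hsum (φ : ℕ → ℝ) : weightedSum n φ ((Ico k l).indicator fun i ↦ C * r ^ i) =
      C * ∑ i ∈ Finset.Ico k l, r ^ i * φ i := by
    have hsub : Finset.Ico k l ⊆ Finset.range n := fun i hi ↦ by grind
    rw [weightedSum_apply, Finset.mul_sum, ← Finset.sum_subset hsub fun i _ hi ↦ by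
      simp [indicator_of_notMem (show i ∉ Ico k l by simpa using hi)]]
    exact Finset.sum_congr rfl fun i hi ↦ by
      rw [indicator_of_mem (show i ∈ Ico k l by simpa using hi), mul_assoc]
  rw [hsum] at hxg hxh
  exact ⟨k, l, hkl, hln, r, hr, pos_of_mul_pos_right hxg hC.le, pos_of_mul_pos_right hxh hC.le⟩

/-! ### Riemann sums along uniform partitions -/

section Partition

variable {a b t : ℝ} {n i : ℕ}

/-- The `i`-th node of the partition of `[a, b]` into `n` cells of equal length.
All nodes are `a` when `n = 0`. -/
noncomputable def node (a b : ℝ) (n i : ℕ) : ℝ := a + i * ((b - a) / n)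

lemma node_zero : node a b n 0 = a := by simp [node]

lemma node_self (hn : n ≠ 0) : node a b n n = b := by
  have : (n : ℝ) ≠ 0 := Nat.cast_ne_zero.2 hn
  simp only [node]
  field_simp
  ring

lemma node_succ : node a b n (i + 1) = node a b n i + (b - a) / n := by
  simp only [node]
  push_cast
  ring

lemma monotone_node (hab : a ≤ b) (n : ℕ) : Monotone (node a b n) := fun i j hij ↦ by
  have : 0 ≤ (b - a) / n := div_nonneg (sub_nonneg.2 hab) n.cast_nonneg
  simp only [node]
  gcongr

lemma node_mem_Icc (hab : a ≤ b) (hn : n ≠ 0) (hi : i ≤ n) : node a b n i ∈ Icc a b :=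
  ⟨node_zero.symm.trans_le (monotone_node hab n i.zero_le),
    (monotone_node hab n hi).trans_eq (node_self hn)⟩

lemma Icc_node_subset (hab : a ≤ b) (hn : n ≠ 0) (hi : i < n) :
    Icc (node a b n i) (node a b n (i + 1)) ⊆ Icc a b :=
  Icc_subset_Icc (node_mem_Icc hab hn hi.le).1 (node_mem_Icc hab hn hi).2

lemma ceil_eq_succ_iff_mem_Ioc_node (hab : a < b) (hn : n ≠ 0) :
    ⌈(t - a) / ((b - a) / n)⌉₊ = i + 1 ↔ t ∈ Ioc (node a b n i) (node a b n (i + 1)) := by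
  have hm : 0 < (b - a) / n := div_pos (sub_pos.2 hab) (by positivity)
  rw [Nat.ceil_eq_iff (by omega), lt_div_iff₀ hm, div_le_iff₀ hm, lt_sub_iff_add_lt',
    sub_le_iff_le_add', mem_Ioc, Nat.add_sub_cancel, node, node]

/-- The step function on the cells of the partition of `(a, b]` into `n` equal parts whose value is
that of `ψ` at the left node of the cell; its integral is a Riemann sum of `ψ`. -/
noncomputable def sampled (a b : ℝ) (n : ℕ) (ψ : ℝ → ℝ) (t : ℝ) : ℝ :=
  ψ (node a b n (⌈(t - a) / ((b - a) / n)⌉₊ - 1))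

variable {ψ : ℝ → ℝ}

lemma measurable_sampled : Measurable (sampled a b n ψ) :=
  (measurable_from_nat (f := fun i ↦ ψ (node a b n (i - 1)))).comp <|
    Nat.measurable_ceil.comp (by fun_prop)

lemma sampled_eq (hab : a < b) (hn : n ≠ 0) (ht : t ∈ Ioc (node a b n i) (node a b n (i + 1))) :
    sampled a b n ψ t = ψ (node a b n i) := by
  rw [sampled, (ceil_eq_succ_iff_mem_Ioc_node hab hn).2 ht, Nat.add_sub_cancel]

lemma exists_mem_Ioc_node (hab : a < b) (hn : n ≠ 0) (ht : t ∈ Ioc a b) :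
    ∃ i < n, t ∈ Ioc (node a b n i) (node a b n (i + 1)) := by
  have hm : 0 < (b - a) / n := div_pos (sub_pos.2 hab) (by positivity)
  obtain ⟨i, hi⟩ := Nat.exists_eq_succ_of_ne_zero
    (Nat.ceil_pos.2 (div_pos (sub_pos.2 ht.1) hm)).ne'
  have hmem := (ceil_eq_succ_iff_mem_Ioc_node hab hn).1 hi
  refine ⟨i, not_le.1 fun hni ↦ ?_, hmem⟩
  exact (hmem.1.trans_le ht.2).not_ge ((node_self hn).ge.trans (monotone_node hab.le n hni))

lemma tendsto_sampled (hab : a < b) (ht : t ∈ Ioc a b) (hψ : ContinuousWithinAt ψ (Icc a b) t) :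
    Tendsto (fun n ↦ sampled a b n ψ t) atTop (𝓝 (ψ t)) := by
  refine hψ.tendsto.comp (tendsto_nhdsWithin_iff.2 ⟨?_, ?_⟩)
  · refine tendsto_iff_dist_tendsto_zero.2 <| squeeze_zero' (.of_forall fun _ ↦ dist_nonneg) ?_
      (tendsto_const_div_atTop_nhds_zero_nat (b - a))
    filter_upwards [eventually_ne_atTop 0] with n hn
    obtain ⟨i, -, hi⟩ := exists_mem_Ioc_node hab hn ht
    rw [(ceil_eq_succ_iff_mem_Ioc_node hab hn).2 hi, Nat.add_sub_cancel, Real.dist_eq,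
      abs_of_nonpos (sub_nonpos.2 hi.1.le)]
    linarith [hi.2, node_succ (a := a) (b := b) (n := n) (i := i)]
  · filter_upwards [eventually_ne_atTop 0] with n hn
    obtain ⟨i, hin, hi⟩ := exists_mem_Ioc_node hab hn ht
    rw [(ceil_eq_succ_iff_mem_Ioc_node hab hn).2 hi, Nat.add_sub_cancel]
    exact node_mem_Icc hab.le hn hin.le

lemma integral_sampled (hab : a < b) (hn : n ≠ 0) (ψ : ℝ → ℝ) :
    ∫ t in a..b, sampled a b n ψ t =
      (b - a) / n * ∑ i ∈ Finset.range n, ψ (node a b n i) := by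
  have hcell (i : ℕ) : EqOn (sampled a b n ψ) (fun _ ↦ ψ (node a b n i))
      (uIoc (node a b n i) (node a b n (i + 1))) := fun t ht ↦
    sampled_eq hab hn (uIoc_of_le (monotone_node hab.le n i.le_succ) ▸ ht)
  have hsum := intervalIntegral.sum_integral_adjacent_intervals (a := node a b n) (n := n)
    (μ := volume) (f := sampled a b n ψ) fun i _ ↦
      (intervalIntegrable_congr (hcell i)).2 intervalIntegrable_const
  rw [node_zero, node_self hn] at hsum
  rw [← hsum, Finset.mul_sum]
  refine Finset.sum_congr rfl fun i _ ↦ ?_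
  rw [intervalIntegral.integral_congr_ae (.of_forall (hcell i)), intervalIntegral.integral_const,
    node_succ, add_sub_cancel_left, smul_eq_mul]

lemma tendsto_riemannSum (hab : a < b) {C : ℝ} (hbound : ∀ t ∈ Icc a b, |ψ t| ≤ C)
    (hψ : ∀ᵐ t, t ∈ Icc a b → ContinuousWithinAt ψ (Icc a b) t) :
    Tendsto (fun n : ℕ ↦ (b - a) / n * ∑ i ∈ Finset.range n, ψ (node a b n i)) atTop
      (𝓝 (∫ t in a..b, ψ t)) := by
  have hlim : Tendsto (fun n ↦ ∫ t in a..b, sampled a b n ψ t) atTop (𝓝 (∫ t in a..b, ψ t)) := by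
    refine intervalIntegral.tendsto_integral_filter_of_dominated_convergence (fun _ ↦ C)
      (.of_forall fun n ↦ measurable_sampled.aestronglyMeasurable) ?_ intervalIntegrable_const ?_
    · filter_upwards [eventually_ne_atTop 0] with n hn
      refine .of_forall fun t ht ↦ ?_
      obtain ⟨i, hin, hi⟩ := exists_mem_Ioc_node hab hn (uIoc_of_le hab.le ▸ ht)
      simpa only [sampled_eq hab hn hi, norm_eq_abs] using hbound _ (node_mem_Icc hab.le hn hin.le)
    · filter_upwards [hψ] with t hψ ht
      rw [uIoc_of_le hab.le] at ht
      exact tendsto_sampled hab ht (hψ (Ioc_subset_Icc_self ht))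
  exact hlim.congr' <| (eventually_ne_atTop 0).mono fun n hn ↦ integral_sampled hab hn ψ

lemma eventually_forall_abs_sub_node_lt (hab : a ≤ b) {φ : ℝ → ℝ} (hφ : ContinuousOn φ (Icc a b))
    {ε : ℝ} (hε : 0 < ε) :
    ∀ᶠ n : ℕ in atTop, ∀ i < n, ∀ t ∈ Icc (node a b n i) (node a b n (i + 1)),
      |φ t - φ (node a b n i)| < ε := by
  obtain ⟨d, hd, hunif⟩ := Metric.uniformContinuousOn_iff.1
    (isCompact_Icc.uniformContinuousOn_of_continuous hφ) ε hε
  filter_upwards [(tendsto_const_div_atTop_nhds_zero_nat (b - a)).eventually_lt_const hd,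
    eventually_ne_atTop 0] with n hmesh hn i hi t ht
  refine hunif t (Icc_node_subset hab hn hi ht) _ (node_mem_Icc hab hn hi.le) ?_
  rw [Real.dist_eq, abs_of_nonneg (sub_nonneg.2 ht.1)]
  linarith [ht.2, node_succ (a := a) (b := b) (n := n) (i := i)]

end Partition

lemma sum_mul_integral_le_integral_mul {p : ℕ → ℝ} (hp : Monotone p) {k l : ℕ} (hkl : k ≤ l)
    {w φ : ℝ → ℝ} {c : ℕ → ℝ} (hw : Continuous w) (hw₀ : ∀ t, 0 ≤ w t)
    (hφ : ContinuousOn φ (Icc (p k) (p l)))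
    (hc : ∀ i, k ≤ i → i < l → ∀ t ∈ Icc (p i) (p (i + 1)), c i ≤ φ t) :
    ∑ i ∈ Finset.Ico k l, (∫ t in p i..p (i + 1), w t) * c i ≤ ∫ t in p k..p l, w t * φ t := by
  have hint (i : ℕ) (hi : i ∈ Ico k l) :
      IntervalIntegrable (fun t ↦ w t * φ t) volume (p i) (p (i + 1)) :=
    (hw.continuousOn.mul (hφ.mono (Icc_subset_Icc (hp hi.1) (hp hi.2)))).intervalIntegrable_of_Icc
      (hp i.le_succ)
  rw [← intervalIntegral.sum_integral_adjacent_intervals_Ico hkl hint]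
  refine Finset.sum_le_sum fun i hi ↦ ?_
  rw [Finset.mem_Ico] at hi
  rw [← intervalIntegral.integral_mul_const]
  exact intervalIntegral.integral_mono_on (hp i.le_succ)
    ((hw.mul continuous_const).intervalIntegrable _ _) (hint i hi)
    fun t ht ↦ mul_le_mul_of_nonneg_left (hc i hi.1 hi.2 t ht) (hw₀ t)

lemma integral_exp_node {a b : ℝ} (n i : ℕ) (δ : ℝ) :
    ∫ t in node a b n i..node a b n (i + 1), exp (δ * t) =
      (∫ t in a..a + (b - a) / n, exp (δ * t)) * exp (δ * ((b - a) / n)) ^ i := by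
  have hshift := intervalIntegral.integral_comp_add_right (a := a) (b := a + (b - a) / n)
    (fun t ↦ exp (δ * t)) (i * ((b - a) / n))
  rw [node_succ, node, add_right_comm, ← hshift, ← intervalIntegral.integral_mul_const]
  congr 1 with t
  rw [← exp_nat_mul, ← exp_add]
  congr 1
  ring

/-! ### Log-concave functions -/

lemma bddAbove_image_of_concaveOn {s : Set ℝ} {f : ℝ → ℝ} (hf : ConcaveOn ℝ s f)
    (hs : Bornology.IsBounded s) : BddAbove (f '' s) := by
  obtain hsub | hnt := s.subsingleton_or_nontrivial
  · exact (hsub.image f).finite.bddAbove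
  obtain ⟨u, hu, w, hw, huw⟩ := hnt.exists_lt
  obtain ⟨v, huv, hvw⟩ := exists_between huw
  have hv : v ∈ s := hf.1.ordConnected.out hu hw ⟨huv.le, hvw.le⟩
  set c := (f v - f u) / (v - u)
  set d := (f w - f v) / (w - v)
  refine ⟨f v + (|c| + |d|) * Metric.diam s, forall_mem_image.2 fun t ht ↦ ?_⟩
  have hdiam : |t - v| ≤ Metric.diam s := Metric.dist_le_diam_of_mem hs ht hv
  suffices f t - f v ≤ (|c| + |d|) * |t - v| by
    have := mul_le_mul_of_nonneg_left hdiam (add_nonneg (abs_nonneg c) (abs_nonneg d))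
    linarith
  obtain htv | rfl | hvt := lt_trichotomy t v
  · have hslope := hf.slope_anti_adjacent ht hw htv hvw
    rw [le_div_iff₀ (sub_pos.2 htv)] at hslope
    rw [abs_of_neg (sub_neg.2 htv)]
    nlinarith [neg_abs_le d, abs_nonneg c, sub_pos.2 htv]
  · simp
  · have hslope := hf.slope_anti_adjacent hu ht huv hvt
    rw [div_le_iff₀ (sub_pos.2 hvt)] at hslope
    rw [abs_of_pos (sub_pos.2 hvt)]
    nlinarith [le_abs_self c, abs_nonneg d, sub_pos.2 hvt]

/-- Log-concavity of a nonnegative function on `ℝ`, in the multiplicative form which does not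
require its logarithm where it vanishes. -/
structure LogConcave (F : ℝ → ℝ) : Prop where
  nonneg (t : ℝ) : 0 ≤ F t
  rpow_mul_rpow_le (x y t : ℝ) (ht : t ∈ Icc (0 : ℝ) 1) :
    F x ^ t * F y ^ (1 - t) ≤ F (t * x + (1 - t) * y)

namespace LogConcave

variable {F : ℝ → ℝ}

lemma pos_of_mem_support (hF : LogConcave F) {t : ℝ} (ht : t ∈ support F) : 0 < F t :=
  (hF.nonneg t).lt_of_ne' ht

lemma mul_le_sq (hF : LogConcave F) (x m : ℝ) : F x * F (x + 2 * m) ≤ F (x + m) ^ 2 := by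
  have hmid := hF.rpow_mul_rpow_le x (x + 2 * m) (1 / 2) (by norm_num)
  rw [show (1 : ℝ) - 1 / 2 = 1 / 2 by norm_num, ← mul_rpow (hF.nonneg _) (hF.nonneg _),
    ← sqrt_eq_rpow, show 1 / 2 * x + 1 / 2 * (x + 2 * m) = x + m by ring] at hmid
  exact (sqrt_le_iff.1 hmid).2

lemma quasiconcaveOn (hF : LogConcave F) : QuasiconcaveOn ℝ univ F := by
  refine quasiconcaveOn_iff_min_le.2 ⟨convex_univ, fun x _ y _ s t hs ht hst ↦ ?_⟩
  obtain rfl : t = 1 - s := by linarith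
  have hmin : 0 ≤ min (F x) (F y) := le_min (hF.nonneg x) (hF.nonneg y)
  calc min (F x) (F y) = min (F x) (F y) ^ s * min (F x) (F y) ^ (1 - s) := by
        rw [← rpow_add_of_nonneg hmin hs ht, hst, rpow_one]
    _ ≤ F x ^ s * F y ^ (1 - s) := by 
        gcongr
        exacts [rpow_nonneg (hF.nonneg x) s, min_le_left _ _, min_le_right _ _]
    _ ≤ F (s * x + (1 - s) * y) := hF.rpow_mul_rpow_le x y s ⟨hs, by linarith⟩

lemma convex_support (hF : LogConcave F) : Convex ℝ (support F) := by
  convert hF.quasiconcaveOn.convex_gt 0 using 1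
  ext t
  simp [(hF.nonneg t).lt_iff_ne']

lemma isLogConcaveSeq (hF : LogConcave F) (a : ℝ) {m : ℝ} (hm : 0 ≤ m) :
    IsLogConcaveSeq fun i ↦ F (a + i * m) := by
  refine .of_ordConnected_support (fun i ↦ hF.nonneg _) ?_ fun i ↦ ?_
  · exact hF.convex_support.ordConnected.preimage_mono fun i j hij ↦ by gcongr
  · convert hF.mul_le_sq (a + i * m) m using 3 <;> push_cast <;> ring_nf

lemma measurable (hF : LogConcave F) : Measurable F :=
  measurable_of_Ici fun r ↦ by
    convert (hF.quasiconcaveOn r).ordConnected.measurableSet using 1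
    ext
    simp

lemma concaveOn_log (hF : LogConcave F) : ConcaveOn ℝ (support F) fun t ↦ log (F t) := by
  refine ⟨hF.convex_support, fun x hx y hy s t hs ht hst ↦ ?_⟩
  obtain rfl : t = 1 - s := by linarith
  have hx := hF.pos_of_mem_support hx
  have hy := hF.pos_of_mem_support hy
  simp only [smul_eq_mul]
  rw [← log_rpow hx, ← log_rpow hy, ← log_mul (by positivity) (by positivity)]
  exact log_le_log (by positivity) (hF.rpow_mul_rpow_le x y s ⟨hs, by linarith⟩)

lemma ae_continuousAt (hF : LogConcave F) : ∀ᵐ t, ContinuousAt F t := by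
  filter_upwards [measure_eq_zero_iff_ae_notMem.1 (hF.convex_support.addHaar_frontier volume)]
    with t ht
  by_cases hint : t ∈ interior (support F)
  · have hlog := hF.concaveOn_log.continuousOn_interior.continuousAt
      (isOpen_interior.mem_nhds hint)
    refine hlog.rexp.congr ?_
    filter_upwards [isOpen_interior.mem_nhds hint] with s hs
    exact exp_log (hF.pos_of_mem_support (interior_subset hs))
  · have hcl : t ∉ closure (support F) := fun h ↦ ht ⟨h, hint⟩
    exact continuousAt_const.congr (notMem_tsupport_iff_eventuallyEq.1 hcl).symm

lemma exists_forall_mem_Icc_le (hF : LogConcave F) (a b : ℝ) : ∃ C, ∀ t ∈ Icc a b, F t ≤ C := by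
  obtain ⟨C, hC⟩ := bddAbove_image_of_concaveOn
    (hF.concaveOn_log.subset inter_subset_left (hF.convex_support.inter (convex_Icc a b)))
    ((Metric.isBounded_Icc a b).subset inter_subset_right)
  refine ⟨exp C, fun t ht ↦ ?_⟩
  by_cases h : t ∈ support F
  · exact (log_le_iff_le_exp (hF.pos_of_mem_support h)).1 (hC ⟨t, ⟨h, ht⟩, rfl⟩)
  · exact (notMem_support.1 h).trans_le (exp_nonneg C)

lemma intervalIntegrable (hF : LogConcave F) (a b : ℝ) : IntervalIntegrable F volume a b := by
  obtain ⟨C, hC⟩ := hF.exists_forall_mem_Icc_le (min a b) (max a b)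
  refine intervalIntegrable_iff.2 <| Measure.integrableOn_of_bounded (M := C) (by simp [uIoc])
    hF.measurable.aestronglyMeasurable ?_
  filter_upwards [ae_restrict_mem measurableSet_uIoc] with t ht
  rw [norm_eq_abs, abs_of_nonneg (hF.nonneg t)]
  exact hC t (Ioc_subset_Icc_self ht)

end LogConcave

/-! ### Localization for log-concave functions -/

section Localization

variable {F g h : ℝ → ℝ} {a b : ℝ}

lemma integral_mul_sub_const_mul {w f : ℝ → ℝ} (hw : IntervalIntegrable w volume a b)
    (hab : a ≤ b) (hf : ContinuousOn f (Icc a b)) (hg : ContinuousOn g (Icc a b)) (c : ℝ) :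
    ∫ t in a..b, w t * (f t - c * g t) =
      (∫ t in a..b, w t * f t) - c * ∫ t in a..b, w t * g t := by
  rw [← uIcc_of_le hab] at hf hg
  rw [← intervalIntegral.integral_const_mul, ← intervalIntegral.integral_sub
    (hw.mul_continuousOn hf) ((hw.mul_continuousOn hg).const_mul c)]
  congr 1 with t
  ring

namespace LogConcave

lemma tendsto_sum_node_mul (hF : LogConcave F) (hab : a < b) (hg : ContinuousOn g (Icc a b)) :
    Tendsto (fun n : ℕ ↦ (b - a) / n * ∑ i ∈ Finset.range n, F (node a b n i) * g (node a b n i))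
      atTop (𝓝 (∫ t in a..b, F t * g t)) := by
  obtain ⟨C, hC⟩ := hF.exists_forall_mem_Icc_le a b
  obtain ⟨D, hD⟩ := isCompact_Icc.exists_bound_of_continuousOn hg
  refine tendsto_riemannSum (ψ := fun t ↦ F t * g t) (C := C * D) hab (fun t ht ↦ ?_) ?_
  · rw [abs_mul, abs_of_nonneg (hF.nonneg t)]
    exact mul_le_mul (hC t ht) (hD t ht) (abs_nonneg _) ((hF.nonneg t).trans (hC t ht))
  · filter_upwards [hF.ae_continuousAt] with t hFt ht
    exact hFt.continuousWithinAt.mul (hg t ht)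

/- Lowering `g` by `η` turns each sample into a lower bound on its whole cell, so that positivity of
the sums can be carried back to integrals. -/
lemma exists_eventually_sum_pos (hF : LogConcave F) (hab : a < b) (hg : ContinuousOn g (Icc a b))
    (hFg : 0 < ∫ t in a..b, F t * g t) :
    ∃ η, ∀ᶠ n : ℕ in atTop,
      0 < ∑ i ∈ Finset.range n, F (node a b n i) * (g (node a b n i) - η) ∧
      ∀ i < n, ∀ t ∈ Icc (node a b n i) (node a b n (i + 1)), g (node a b n i) - η ≤ g t := by
  have hsub (η : ℝ) := integral_mul_sub_const_mul (hF.intervalIntegrable a b) hab.le hg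
    (continuousOn_const (c := (1 : ℝ))) η
  obtain ⟨η, hη, hη₀⟩ : ∃ η : ℝ, 0 < ∫ t in a..b, F t * (g t - η * 1) ∧ 0 < η := by
    have hev : ∀ᶠ η : ℝ in 𝓝 0, 0 < ∫ t in a..b, F t * (g t - η * 1) := by
      simp only [hsub]
      exact continuousAt_const.eventually_lt (by fun_prop) (by simpa using hFg)
    exact ((hev.filter_mono nhdsWithin_le_nhds).and self_mem_nhdsWithin).exists (f := 𝓝[>] 0)
  simp only [mul_one] at hη
  refine ⟨η, ?_⟩
  filter_upwards [(hF.tendsto_sum_node_mul hab (hg.sub continuousOn_const)).eventually_const_lt hη,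
    eventually_forall_abs_sub_node_lt hab.le hg hη₀] with n hpos hcell
  exact ⟨pos_of_mul_pos_right hpos (div_nonneg (sub_nonneg.2 hab.le) n.cast_nonneg),
    fun i hi t ht ↦ by linarith [abs_lt.1 (hcell i hi t ht)]⟩

end LogConcave

lemma integral_exp_mul_pos_of_sum_pos (hab : a < b) (hg : ContinuousOn g (Icc a b)) {n k l : ℕ}
    (hn : n ≠ 0) (hkl : k ≤ l) (hln : l ≤ n) {c : ℕ → ℝ} {δ : ℝ}
    (hc : ∀ i < n, ∀ t ∈ Icc (node a b n i) (node a b n (i + 1)), c i ≤ g t)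
    (hsum : 0 < ∑ i ∈ Finset.Ico k l, exp (δ * ((b - a) / n)) ^ i * c i) :
    0 < ∫ t in node a b n k..node a b n l, exp (δ * t) * g t := by
  have hcell : 0 < ∫ t in a..a + (b - a) / n, exp (δ * t) :=
    intervalIntegral.intervalIntegral_pos_of_pos_on
      ((by fun_prop : Continuous fun t ↦ exp (δ * t)).intervalIntegrable _ _)
      (fun t _ ↦ exp_pos _) (lt_add_of_pos_right a (div_pos (sub_pos.2 hab) (by positivity)))
  have hle := sum_mul_integral_le_integral_mul (monotone_node hab.le n) hkl
    (w := fun t ↦ exp (δ * t)) (by fun_prop) (fun t ↦ (exp_pos _).le)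
    (hg.mono <| Icc_subset_Icc (node_mem_Icc hab.le hn (hkl.trans hln)).1
      (node_mem_Icc hab.le hn hln).2) fun i _ hil ↦ hc i (hil.trans_le hln)
  simp only [integral_exp_node, mul_assoc, ← Finset.mul_sum] at hle
  exact (mul_pos hcell hsum).trans_le hle

theorem LogConcave.exists_integral_exp_mul_pos (hF : LogConcave F) (hab : a < b)
    (hg : ContinuousOn g (Icc a b)) (hh : ContinuousOn h (Icc a b))
    (hFg : 0 < ∫ t in a..b, F t * g t) (hFh : 0 < ∫ t in a..b, F t * h t) :
    ∃ c d δ : ℝ, a ≤ c ∧ c ≤ d ∧ d ≤ b ∧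
      0 < ∫ t in c..d, exp (δ * t) * g t ∧ 0 < ∫ t in c..d, exp (δ * t) * h t := by
  obtain ⟨η, hη⟩ := hF.exists_eventually_sum_pos hab hg hFg
  obtain ⟨θ, hθ⟩ := hF.exists_eventually_sum_pos hab hh hFh
  obtain ⟨n, ⟨hgsum, hgcell⟩, ⟨hhsum, hhcell⟩, hn⟩ :=
    (hη.and (hθ.and (eventually_ne_atTop 0))).exists
  have hm : 0 < (b - a) / n := div_pos (sub_pos.2 hab) (by positivity)
  have hsamples := (hF.isLogConcaveSeq a hm.le).indicator_Iio n
  have htrunc (φ : ℕ → ℝ) : ∑ i ∈ Finset.range n, F (node a b n i) * φ i =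
      ∑ i ∈ Finset.range n, (Iio n).indicator (fun i ↦ F (node a b n i)) i * φ i :=
    Finset.sum_congr rfl fun i hi ↦ by rw [indicator_of_mem (by simpa using hi)]
  rw [htrunc fun i ↦ g (node a b n i) - η] at hgsum
  rw [htrunc fun i ↦ h (node a b n i) - θ] at hhsum
  obtain ⟨k, l, hkl, hln, r, hr, hgpos, hhpos⟩ := hsamples.exists_geometric_sum_pos
    (fun i hi ↦ by simp [hi]) hgsum hhsum
  rw [show r = exp (log r / ((b - a) / n) * ((b - a) / n)) by
    rw [div_mul_cancel₀ _ hm.ne', exp_log hr]] at hgpos hhpos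
  exact ⟨node a b n k, node a b n l, log r / ((b - a) / n),
    (node_mem_Icc hab.le hn (hkl.trans hln)).1, monotone_node hab.le n hkl,
    (node_mem_Icc hab.le hn hln).2, integral_exp_mul_pos_of_sum_pos hab hg hn hkl hln hgcell hgpos,
    integral_exp_mul_pos_of_sum_pos hab hh hn hkl hln hhcell hhpos⟩

end Localization

lemma rpow_mul_rpow_lt_iff_exists_scaling {α β A B C D : ℝ} (hα : 0 < α) (hβ : 0 < β) (hA : 0 ≤ A)
    (hB : 0 ≤ B) (hC : 0 ≤ C) (hD : 0 ≤ D) :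
    C ^ α * D ^ β < A ^ α * B ^ β ↔
      ∃ r > 0, ∃ s > 0, r * C < A ∧ s * D < B ∧ 1 ≤ r ^ α * s ^ β := by
  constructor
  · intro hlt
    have hpos : 0 < A ^ α * B ^ β := lt_of_le_of_lt (by positivity) hlt
    have hA₀ : 0 < A := hA.lt_of_ne' <| by rintro rfl; simp [zero_rpow hα.ne'] at hpos
    have hB₀ : 0 < B := hB.lt_of_ne' <| by rintro rfl; simp [zero_rpow hβ.ne'] at hpos
    obtain ⟨ρ, hρ, hρ₀⟩ : ∃ ρ : ℝ, (C + ρ) ^ α * (D + ρ) ^ β < A ^ α * B ^ β ∧ 0 < ρ := by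
      have hcont : Continuous fun ρ : ℝ ↦ (C + ρ) ^ α * (D + ρ) ^ β := by
        fun_prop (disch := positivity)
      have hev := (hcont.tendsto 0).eventually_lt_const (by simpa using hlt)
      exact ((hev.filter_mono nhdsWithin_le_nhds).and self_mem_nhdsWithin).exists (f := 𝓝[>] 0)
    refine ⟨A / (C + ρ), by positivity, B / (D + ρ), by positivity, ?_, ?_, ?_⟩
    · rw [div_mul_eq_mul_div, div_lt_iff₀ (by positivity)]
      gcongr
      linarith
    · rw [div_mul_eq_mul_div, div_lt_iff₀ (by positivity)]
      gcongr
      linarith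
    · rw [div_rpow hA (by positivity), div_rpow hB (by positivity), div_mul_div_comm,
        one_le_div (by positivity)]
      exact hρ.le
  · rintro ⟨r, hr, s, hs, hrC, hsD, hrs⟩
    calc C ^ α * D ^ β ≤ r ^ α * s ^ β * (C ^ α * D ^ β) :=
          le_mul_of_one_le_left (by positivity) hrs
      _ = (r * C) ^ α * (s * D) ^ β := by
        rw [mul_rpow hr.le hC, mul_rpow hs.le hD, mul_mul_mul_comm]
      _ < A ^ α * B ^ β := by gcongr

lemma integral_rpow_mul_integral_rpow_lt_iff {a b α β : ℝ} (hab : a ≤ b) (hα : 0 < α) (hβ : 0 < β)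
    {f₁ f₂ f₃ f₄ w : ℝ → ℝ} (hnn : ∀ f ∈ [f₁, f₂, f₃, f₄], ∀ t ∈ Icc a b, 0 ≤ f t)
    (hcont : ∀ f ∈ [f₁, f₂, f₃, f₄], ContinuousOn f (Icc a b)) (hw₀ : ∀ t, 0 ≤ w t)
    (hw : IntervalIntegrable w volume a b) :
    (∫ t in a..b, w t * f₃ t) ^ α * (∫ t in a..b, w t * f₄ t) ^ β <
        (∫ t in a..b, w t * f₁ t) ^ α * (∫ t in a..b, w t * f₂ t) ^ β ↔
      ∃ r > 0, ∃ s > 0, 0 < ∫ t in a..b, w t * (f₁ t - r * f₃ t) ∧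
        0 < ∫ t in a..b, w t * (f₂ t - s * f₄ t) ∧ 1 ≤ r ^ α * s ^ β := by
  have hint (f) (hf : f ∈ [f₁, f₂, f₃, f₄]) : 0 ≤ ∫ t in a..b, w t * f t :=
    intervalIntegral.integral_nonneg hab fun t ht ↦ mul_nonneg (hw₀ t) (hnn f hf t ht)
  simp only [List.forall_mem_cons, List.not_mem_nil, false_implies, implies_true,
    and_true] at hint hcont
  obtain ⟨hf₁, hf₂, hf₃, hf₄⟩ := hcont
  obtain ⟨h₁, h₂, h₃, h₄⟩ := hint
  simp only [integral_mul_sub_const_mul hw hab hf₁ hf₃, integral_mul_sub_const_mul hw hab hf₂ hf₄,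
    sub_pos]
  exact rpow_mul_rpow_lt_iff_exists_scaling hα hβ h₁ h₂ h₃ h₄

theorem stmt_9_general (a b : ℝ) (hab : a ≤ b) (α β : ℝ) (hα : 0 < α) (hβ : 0 < β)
    (f₁ f₂ f₃ f₄ : ℝ → ℝ)
    (hnn : ∀ i ∈ [f₁, f₂, f₃, f₄], ∀ t ∈ Set.Icc a b, 0 ≤ i t)
    (hcont : ∀ i ∈ [f₁, f₂, f₃, f₄], ContinuousOn i (Set.Icc a b))
    (F : ℝ → ℝ) (hF : LogConcave F)
    (hexp : ∀ a' b' : ℝ, a ≤ a' → a' ≤ b' → b' ≤ b → ∀ δ : ℝ,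
      (∫ t in a'..b', exp (δ * t) * f₁ t) ^ α * (∫ t in a'..b', exp (δ * t) * f₂ t) ^ β ≤
      (∫ t in a'..b', exp (δ * t) * f₃ t) ^ α * (∫ t in a'..b', exp (δ * t) * f₄ t) ^ β) :
    (∫ t in a..b, F t * f₁ t) ^ α * (∫ t in a..b, F t * f₂ t) ^ β ≤
      (∫ t in a..b, F t * f₃ t) ^ α * (∫ t in a..b, F t * f₄ t) ^ β := by
  obtain rfl | hab := hab.eq_or_lt
  · simp [zero_rpow hα.ne']
  by_contra! hlt
  obtain ⟨r, hr, s, hs, hg, hh, hrs⟩ := (integral_rpow_mul_integral_rpow_lt_iff hab.le hα hβ hnn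
    hcont hF.nonneg (hF.intervalIntegrable a b)).1 hlt
  obtain ⟨hf₁, hf₂, hf₃, hf₄⟩ : ContinuousOn f₁ (Icc a b) ∧ ContinuousOn f₂ (Icc a b) ∧
      ContinuousOn f₃ (Icc a b) ∧ ContinuousOn f₄ (Icc a b) := by simpa using hcont
  obtain ⟨c, d, δ, hac, hcd, hdb, hg, hh⟩ := hF.exists_integral_exp_mul_pos hab
    (hf₁.sub (hf₃.const_mul r)) (hf₂.sub (hf₄.const_mul s)) hg hh
  have hsub : Icc c d ⊆ Icc a b := Icc_subset_Icc hac hdb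
  have hexp_int : IntervalIntegrable (fun t ↦ exp (δ * t)) volume c d :=
    (by fun_prop : Continuous fun t ↦ exp (δ * t)).intervalIntegrable c d
  exact (hexp c d hac hcd hdb δ).not_gt <| (integral_rpow_mul_integral_rpow_lt_iff hcd hα hβ
    (fun f hf t ht ↦ hnn f hf t (hsub ht)) (fun f hf ↦ (hcont f hf).mono hsub)
    (fun t ↦ (exp_pos _).le) hexp_int).2 ⟨r, hr, s, hs, hg, hh, hrs⟩

/-- KLS reduction from log-concave weights to exponential weights: if the four-function
inequality holds with weight `e^{δt}` on every subinterval, it holds with any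
log-concave weight `F`. -/
theorem stmt_9 (a b : ℝ) (hab : a ≤ b) (α β : ℝ) (hα : 0 < α) (hβ : 0 < β)
    (f₁ f₂ f₃ f₄ : ℝ → ℝ)
    (hnn : ∀ i ∈ [f₁, f₂, f₃, f₄], ∀ t ∈ Set.Icc a b, 0 ≤ i t)
    (hcont : ∀ i ∈ [f₁, f₂, f₃, f₄], ContinuousOn i (Set.Icc a b))
    (F : ℝ → ℝ) (hFnn : ∀ t, 0 ≤ F t) (hFcont : Continuous F)
    (hFlc : ∀ x y : ℝ, ∀ t ∈ Set.Icc (0 : ℝ) 1,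
      F x ^ t * F y ^ (1 - t) ≤ F (t * x + (1 - t) * y))
    (hexp : ∀ a' b' : ℝ, a ≤ a' → a' ≤ b' → b' ≤ b → ∀ δ : ℝ,
      (∫ t in a'..b', Real.exp (δ * t) * f₁ t) ^ α *
        (∫ t in a'..b', Real.exp (δ * t) * f₂ t) ^ β ≤
      (∫ t in a'..b', Real.exp (δ * t) * f₃ t) ^ α *
        (∫ t in a'..b', Real.exp (δ * t) * f₄ t) ^ β) :
    (∫ t in a..b, F t * f₁ t) ^ α * (∫ t in a..b, F t * f₂ t) ^ β ≤
      (∫ t in a..b, F t * f₃ t) ^ α * (∫ t in a..b, F t * f₄ t) ^ β :=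
  stmt_9_general a b hab α β hα hβ f₁ f₂ f₃ f₄ hnn hcont F ⟨hFnn, hFlc⟩ hexp
end

section
/- Let μ be a probability measure on ℝ with log-concave density e^{-ψ} (ψ convex) supported on an interval, let K₁, K₂, K₃ be a measurable partition of the support with dist(K₁, K₃) ≥ ε, and let m = ∫ |x - u| dμ(x) for some fixed u in the support. Then (m/(ε·log 2))·μ(K₂) ≥ μ(K₁)·μ(K₃). -/
open MeasureTheory Real Set

/-!
Let `F` be the cdf of `μ`, `g` its density and `m = ∫ |x - u| dμ`. A segment from `K₁` to `K₃`
spends length at least `ε` in `K₂`, so integrating over pairs of points gives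
`ε μ(K₁) μ(K₃) ≤ ∫_{K₂} F (1 - F)`, and it suffices to show the Cheeger-type inequality
`log 2 * F (1 - F) ≤ m g`.

Log-concavity says that `g` is a concave function of `F`; let `ℓ` be its tangent line at `F t`. Then
`m ≥ ∫ min (F, 1 - F) dx ≥ ∫₀¹ min (s, 1 - s) / ℓ s ds`, and for an affine `ℓ` the last integral is
explicit: up to scaling it is `(log 2 - H p) / (1 - 2 p) ^ 2`, where `H` is the binary entropy. The
inequality at `t` then follows from `H p ≤ 2 log 2 √(p (1 - p))`.
-/

open ProbabilityTheory
open scoped ENNReal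

section BinaryEntropy

-- For `t = √(p / (1 - p))` this function takes the value `binEntropy p / √(p * (1 - p))`.
lemma hasDerivAt_add_inv_mul_log_one_add_sq {t : ℝ} (ht : t ≠ 0) :
    HasDerivAt (fun t : ℝ => (t + t⁻¹) * log (1 + t ^ 2) - 2 * t * log t)
      ((1 - (t ^ 2)⁻¹) * log (1 + t ^ 2) - 2 * log t) t := by
  have h_sum : HasDerivAt (fun t : ℝ => t + t⁻¹) (1 - (t ^ 2)⁻¹) t := by
    simpa only [sub_eq_add_neg] using (hasDerivAt_id' t).fun_add (hasDerivAt_inv ht)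
  have h_sq : HasDerivAt (fun t : ℝ => 1 + t ^ 2) (2 * t) t := by
    simpa using (hasDerivAt_pow 2 t).const_add 1
  have h_lin : HasDerivAt (fun t : ℝ => 2 * t) 2 t := by
    simpa using (hasDerivAt_id' t).const_mul 2
  refine ((h_sum.fun_mul (h_sq.log (by positivity))).fun_sub
    (h_lin.fun_mul (hasDerivAt_log ht))).congr_deriv ?_
  have : 1 + t ^ 2 ≠ 0 := by positivity
  field_simp
  ring

lemma monotoneOn_add_inv_mul_log_one_add_sq :
    MonotoneOn (fun t : ℝ => (t + t⁻¹) * log (1 + t ^ 2) - 2 * t * log t) (Ioc 0 1) := by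
  have hderiv : ∀ t ∈ Ioc (0 : ℝ) 1, HasDerivAt
      (fun t : ℝ => (t + t⁻¹) * log (1 + t ^ 2) - 2 * t * log t)
      ((1 - (t ^ 2)⁻¹) * log (1 + t ^ 2) - 2 * log t) t := fun t ht =>
    hasDerivAt_add_inv_mul_log_one_add_sq ht.1.ne'
  refine monotoneOn_of_hasDerivWithinAt_nonneg (convex_Ioc 0 1)
    (fun t ht => (hderiv t ht).continuousAt.continuousWithinAt)
    (fun t ht => (hderiv t (interior_subset ht)).hasDerivWithinAt) fun t ht => ?_
  obtain ⟨ht0, ht1⟩ := interior_subset ht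
  have h_coeff : 0 ≤ (t ^ 2)⁻¹ - 1 := sub_nonneg.2 <|
    (one_le_inv₀ (by positivity)).2 (pow_le_one₀ ht0.le ht1)
  have h_log_one_add : log (1 + t ^ 2) ≤ t ^ 2 := by
    linarith [log_le_sub_one_of_pos (show 0 < 1 + t ^ 2 by positivity)]
  have h_log_sq : 2 * log t ≤ t ^ 2 - 1 := by
    simpa [log_pow] using log_le_sub_one_of_pos (show 0 < t ^ 2 by positivity)
  have h_cancel : ((t ^ 2)⁻¹ - 1) * t ^ 2 = 1 - t ^ 2 := by field_simp
  linarith [mul_le_mul_of_nonneg_left h_log_one_add h_coeff]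

lemma binEntropy_le_of_le_half {p : ℝ} (hp0 : 0 < p) (hp : p ≤ 1 / 2) :
    binEntropy p ≤ 2 * log 2 * √(p * (1 - p)) := by
  have hq0 : 0 < 1 - p := by linarith
  obtain ⟨a, b, ha, hb, hpa, hqb⟩ : ∃ a b : ℝ, 0 < a ∧ 0 < b ∧ p = a ^ 2 ∧ 1 - p = b ^ 2 :=
    ⟨√p, √(1 - p), sqrt_pos.2 hp0, sqrt_pos.2 hq0, (sq_sqrt hp0.le).symm, (sq_sqrt hq0.le).symm⟩
  have hab : a ^ 2 + b ^ 2 = 1 := by linarith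
  have hle : a / b ≤ 1 := (div_le_one hb).2 (abs_le_of_sq_le_sq' (by linarith) hb.le).2
  have h_mono := monotoneOn_add_inv_mul_log_one_add_sq ⟨div_pos ha hb, hle⟩ ⟨one_pos, le_rfl⟩ hle
  have h_sq : 1 + (a / b) ^ 2 = (b ^ 2)⁻¹ := by field_simp; linarith
  have h_sum : a / b + (a / b)⁻¹ = (a * b)⁻¹ := by field_simp; linarith
  have h_ratio :
      (a * b)⁻¹ * -(2 * log b) - 2 * (a / b) * (log a - log b) ≤ 2 * log 2 := by
    simp only [h_sq, h_sum] at h_mono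
    simpa [log_inv, log_pow, log_div ha.ne' hb.ne', one_add_one_eq_two] using h_mono
  have h_entropy : binEntropy p =
      a * b * ((a * b)⁻¹ * -(2 * log b) - 2 * (a / b) * (log a - log b)) := by
    rw [binEntropy, hqb, hpa, log_inv, log_inv, log_pow, log_pow]
    field_simp
    push_cast
    linear_combination (-2 * log b) * hab
  have h_sqrt : √(p * (1 - p)) = a * b := by
    rw [hqb, hpa, ← mul_pow, sqrt_sq (by positivity)]
  rw [h_entropy, h_sqrt, mul_comm (2 * log 2)]
  gcongr

lemma binEntropy_le_two_mul_log_two_mul_sqrt {p : ℝ} (hp0 : 0 ≤ p) (hp1 : p ≤ 1) :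
    binEntropy p ≤ 2 * log 2 * √(p * (1 - p)) := by
  rcases hp0.eq_or_lt with rfl | hp0
  · simp
  rcases hp1.eq_or_lt with rfl | hp1
  · simp
  rcases le_total p (1 / 2) with hp | hp
  · exact binEntropy_le_of_le_half hp0 hp
  · simpa [mul_comm p] using
      binEntropy_le_of_le_half (p := 1 - p) (by linarith) (by linarith)

end BinaryEntropy

section AffineProfile

/-- The affine function on `[0, 1]` with values `1 - p` at `0` and `p` at `1`. Up to scaling it is
a tangent line of an isoperimetric profile, the density of a measure as a function of its cdf. -/
def affineProfile (p s : ℝ) : ℝ := (1 - p) * (1 - s) + p * s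

/-- The integral `∫ |x - M| dν` about the median `M` of a probability measure `ν` on `ℝ` whose
isoperimetric profile is `affineProfile p`. -/
noncomputable def affineProfileMoment (p : ℝ) : ℝ :=
  ∫ s in 0..1, min s (1 - s) / affineProfile p s

variable {p s : ℝ}

lemma affineProfile_one_sub_right (p s : ℝ) :
    affineProfile p (1 - s) = affineProfile (1 - p) s := by
  simp only [affineProfile]; ring

lemma continuous_affineProfile (p : ℝ) : Continuous (affineProfile p) := by
  unfold affineProfile; fun_prop

lemma hasDerivAt_affineProfile (p s : ℝ) : HasDerivAt (affineProfile p) (2 * p - 1) s :=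
  ((((hasDerivAt_id' s).const_sub 1).const_mul (1 - p)).add
    ((hasDerivAt_id' s).const_mul p)).congr_deriv (by ring)

lemma min_le_affineProfile (hp : p ∈ Icc (0 : ℝ) 1) : min s (1 - s) ≤ affineProfile p s := by
  obtain ⟨hp0, hp1⟩ := hp
  calc min s (1 - s) = (1 - p) * min s (1 - s) + p * min s (1 - s) := by ring
    _ ≤ affineProfile p s := add_le_add
      (mul_le_mul_of_nonneg_left (min_le_right _ _) (by linarith))
      (mul_le_mul_of_nonneg_left (min_le_left _ _) hp0)

lemma affineProfile_nonneg (hp : p ∈ Icc (0 : ℝ) 1) (hs : s ∈ Icc (0 : ℝ) 1) :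
    0 ≤ affineProfile p s :=
  (le_min hs.1 (sub_nonneg.2 hs.2)).trans (min_le_affineProfile hp)

lemma min_div_affineProfile_mem_Icc (hp : p ∈ Icc (0 : ℝ) 1) (hs : s ∈ Icc (0 : ℝ) 1) :
    min s (1 - s) / affineProfile p s ∈ Icc (0 : ℝ) 1 :=
  ⟨div_nonneg (le_min hs.1 (sub_nonneg.2 hs.2)) (affineProfile_nonneg hp hs),
    div_le_one_of_le₀ (min_le_affineProfile hp) (affineProfile_nonneg hp hs)⟩

lemma mul_min_div_affineProfile_le {a c : ℝ} (ha : 0 < a) (hc : 0 ≤ c) (hs : s ∈ Icc (0 : ℝ) 1)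
    (hle : a ≤ c * affineProfile p s) :
    a * (min s (1 - s) / affineProfile p s) ≤ c * min s (1 - s) := by
  have hpos : 0 < affineProfile p s := pos_of_mul_pos_right (ha.trans_le hle) hc
  rw [mul_div_assoc', div_le_iff₀ hpos, mul_right_comm]
  exact mul_le_mul_of_nonneg_right hle (le_min hs.1 (sub_nonneg.2 hs.2))

lemma integrableOn_min_div_affineProfile (hp : p ∈ Icc (0 : ℝ) 1) :
    IntegrableOn (fun s => min s (1 - s) / affineProfile p s) (Icc 0 1) := by
  have hmeas : Measurable fun s => min s (1 - s) / affineProfile p s :=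
    (by fun_prop : Measurable fun s : ℝ => min s (1 - s)).div
      (continuous_affineProfile p).measurable
  refine Measure.integrableOn_of_bounded (M := 1) (by simp) hmeas.aestronglyMeasurable ?_
  filter_upwards [ae_restrict_mem measurableSet_Icc] with s hs
  obtain ⟨h0, h1⟩ := min_div_affineProfile_mem_Icc hp hs
  rwa [norm_of_nonneg h0]

lemma intervalIntegrable_min_div_affineProfile (hp : p ∈ Icc (0 : ℝ) 1) {a b : ℝ}
    (ha : a ∈ Icc (0 : ℝ) 1) (hb : b ∈ Icc (0 : ℝ) 1) :
    IntervalIntegrable (fun s => min s (1 - s) / affineProfile p s) volume a b :=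
  ((integrableOn_min_div_affineProfile hp).mono_set
    (ordConnected_Icc.uIcc_subset ha hb)).intervalIntegrable

lemma affineProfileMoment_eq_add (hp : p ∈ Icc (0 : ℝ) 1) :
    affineProfileMoment p =
      (∫ s in 0..(1 / 2), s / affineProfile p s) +
        ∫ s in 0..(1 / 2), s / affineProfile (1 - p) s := by
  have hhalf : (1 / 2 : ℝ) ∈ Icc (0 : ℝ) 1 := by norm_num
  have hleft : ∫ s in 0..(1 / 2), min s (1 - s) / affineProfile p s =
      ∫ s in 0..(1 / 2), s / affineProfile p s := by
    refine intervalIntegral.integral_congr fun s hs => ?_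
    rw [uIcc_of_le (by norm_num)] at hs
    simp only [min_eq_left (show s ≤ 1 - s by linarith [hs.2])]
  have hright : ∫ s in (1 / 2)..1, min s (1 - s) / affineProfile p s =
      ∫ s in 0..(1 / 2), s / affineProfile (1 - p) s := by
    have hreflect := intervalIntegral.integral_comp_sub_left (a := 0) (b := 1 / 2)
      (fun s => min s (1 - s) / affineProfile p s) 1
    rw [show (1 : ℝ) - 1 / 2 = 1 / 2 by norm_num, sub_zero] at hreflect
    rw [← hreflect]
    refine intervalIntegral.integral_congr fun s hs => ?_
    rw [uIcc_of_le (by norm_num)] at hs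
    simp only [affineProfile_one_sub_right, sub_sub_cancel,
      min_eq_right (show s ≤ 1 - s by linarith [hs.2])]
  rw [affineProfileMoment, ← hleft, ← hright, intervalIntegral.integral_add_adjacent_intervals]
  · exact intervalIntegrable_min_div_affineProfile hp (by simp) hhalf
  · exact intervalIntegrable_min_div_affineProfile hp hhalf (by simp)

lemma integral_div_affineProfile (hp : p ∈ Icc (0 : ℝ) 1) (hp' : p ≠ 1 / 2) :
    ∫ s in 0..(1 / 2), s / affineProfile p s =
      ((2 * p - 1) / 2 + (1 - p) * (log 2 + log (1 - p))) / (2 * p - 1) ^ 2 := by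
  have hd : 2 * p - 1 ≠ 0 := fun h => hp' (by linarith)
  have hpos : ∀ s ∈ Ioo (0 : ℝ) 1, 0 < affineProfile p s := fun s hs =>
    (lt_min hs.1 (sub_pos.2 hs.2)).trans_le (min_le_affineProfile hp)
  have hcont : ContinuousOn (fun s => ((2 * p - 1) * s - (1 - p) * log (affineProfile p s)) /
      (2 * p - 1) ^ 2) (Icc 0 (1 / 2)) := by
    refine ((continuous_const_mul _).continuousOn.sub ?_).div_const _
    rcases hp.2.eq_or_lt with rfl | hp1
    · simpa using continuousOn_const
    refine continuousOn_const.mul ((continuous_affineProfile p).continuousOn.log fun s hs => ?_)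
    rcases hs.1.eq_or_lt with rfl | hs0
    · simpa [affineProfile, sub_eq_zero] using hp1.ne'
    · exact (hpos s ⟨hs0, by linarith [hs.2]⟩).ne'
  have hderiv : ∀ s ∈ Ioo (0 : ℝ) (1 / 2), HasDerivAt (fun s => ((2 * p - 1) * s -
      (1 - p) * log (affineProfile p s)) / (2 * p - 1) ^ 2) (s / affineProfile p s) s := by
    intro s hs
    have hs_pos := hpos s ⟨hs.1, by linarith [hs.2]⟩
    refine ((((hasDerivAt_id' s).const_mul (2 * p - 1)).fun_sub
      (((hasDerivAt_affineProfile p s).log hs_pos.ne').const_mul (1 - p))).div_const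
        ((2 * p - 1) ^ 2)).congr_deriv ?_
    field_simp
    simp only [affineProfile]
    ring
  have hint : IntervalIntegrable (fun s => s / affineProfile p s) volume 0 (1 / 2) := by
    refine (intervalIntegrable_min_div_affineProfile hp (by simp) (by norm_num)).congr
      fun s hs => ?_
    rw [uIoc_of_le (by norm_num)] at hs
    simp only [min_eq_left (show s ≤ 1 - s by linarith [hs.2])]
  rw [intervalIntegral.integral_eq_sub_of_hasDerivAt_of_le (by norm_num) hcont hderiv hint]
  have hzero : affineProfile p 0 = 1 - p := by simp [affineProfile]
  have hhalf : affineProfile p (1 / 2) = 2⁻¹ := by simp only [affineProfile]; ring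
  rw [hzero, hhalf, log_inv]
  ring

lemma affineProfileMoment_half : affineProfileMoment (1 / 2) = 1 / 2 := by
  have hconst : ∀ s, affineProfile (1 / 2) s = 1 / 2 := fun s => by
    simp only [affineProfile]; ring
  rw [affineProfileMoment_eq_add (by norm_num)]
  norm_num [hconst]

lemma affineProfileMoment_eq (hp : p ∈ Icc (0 : ℝ) 1) (hp' : p ≠ 1 / 2) :
    affineProfileMoment p = (log 2 - binEntropy p) / (2 * p - 1) ^ 2 := by
  have hq : 1 - p ∈ Icc (0 : ℝ) 1 := ⟨sub_nonneg.2 hp.2, by linarith [hp.1]⟩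
  rw [affineProfileMoment_eq_add hp, integral_div_affineProfile hp hp',
    integral_div_affineProfile hq fun h => hp' (by linarith),
    show (2 * (1 - p) - 1) ^ 2 = (2 * p - 1) ^ 2 by ring, ← add_div, binEntropy, log_inv, log_inv,
    sub_sub_cancel]
  ring

lemma log_two_le_mul_affineProfileMoment (hp : p ∈ Icc (0 : ℝ) 1) :
    log 2 ≤ (1 + 2 * √(p * (1 - p))) * affineProfileMoment p := by
  rcases eq_or_ne p (1 / 2) with rfl | hp'
  · have hsqrt : √(1 / 2 * (1 - 1 / 2) : ℝ) = 1 / 2 := by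
      rw [show (1 / 2 * (1 - 1 / 2) : ℝ) = (1 / 2) ^ 2 by norm_num, sqrt_sq (by norm_num)]
    rw [affineProfileMoment_half, hsqrt]
    linarith [log_two_lt_d9]
  have hd : 2 * p - 1 ≠ 0 := fun h => hp' (by linarith)
  have hsq : √(p * (1 - p)) ^ 2 = p * (1 - p) :=
    sq_sqrt (mul_nonneg hp.1 (sub_nonneg.2 hp.2))
  have hentropy := binEntropy_le_two_mul_log_two_mul_sqrt hp.1 hp.2
  rw [affineProfileMoment_eq hp hp', mul_div_assoc', le_div_iff₀ (by positivity)]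
  calc log 2 * (2 * p - 1) ^ 2
      = (1 + 2 * √(p * (1 - p))) * (log 2 - 2 * log 2 * √(p * (1 - p))) := by
        linear_combination (4 * log 2) * hsq
    _ ≤ (1 + 2 * √(p * (1 - p))) * (log 2 - binEntropy p) := by gcongr

lemma mul_one_sub_mul_le_affineProfile (hp : p ∈ Icc (0 : ℝ) 1) :
    s * (1 - s) * (1 + 2 * √(p * (1 - p))) ≤ affineProfile p s := by
  have hp_sq := sq_sqrt hp.1
  have hq_sq := sq_sqrt (sub_nonneg.2 hp.2)
  rw [sqrt_mul hp.1]
  have hprofile : affineProfile p s =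
      s * (1 - s) * (1 + 2 * (√p * √(1 - p))) + (√(1 - p) * (1 - s) - √p * s) ^ 2 := by
    simp only [affineProfile]
    linear_combination (-(1 - s) ^ 2) * hq_sq + (-s ^ 2) * hp_sq
  exact hprofile ▸ le_add_of_nonneg_right (sq_nonneg _)

lemma log_two_mul_le_affineProfile_mul_moment (hp : p ∈ Icc (0 : ℝ) 1) (hs : s ∈ Icc (0 : ℝ) 1) :
    log 2 * (s * (1 - s)) ≤ affineProfile p s * affineProfileMoment p := by
  have hmoment : 0 ≤ affineProfileMoment p := intervalIntegral.integral_nonneg zero_le_one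
    fun s hs => (min_div_affineProfile_mem_Icc hp hs).1
  have hs' : 0 ≤ s * (1 - s) := mul_nonneg hs.1 (sub_nonneg.2 hs.2)
  calc log 2 * (s * (1 - s))
      ≤ (1 + 2 * √(p * (1 - p))) * affineProfileMoment p * (s * (1 - s)) :=
        mul_le_mul_of_nonneg_right (log_two_le_mul_affineProfileMoment hp) hs'
    _ = s * (1 - s) * (1 + 2 * √(p * (1 - p))) * affineProfileMoment p := by ring
    _ ≤ affineProfile p s * affineProfileMoment p :=
        mul_le_mul_of_nonneg_right (mul_one_sub_mul_le_affineProfile hp) hmoment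

lemma lintegral_min_div_affineProfile (hp : p ∈ Icc (0 : ℝ) 1) :
    ∫⁻ s in Ioo 0 1, ENNReal.ofReal (min s (1 - s) / affineProfile p s) =
      ENNReal.ofReal (affineProfileMoment p) := by
  rw [affineProfileMoment, intervalIntegral.integral_of_le zero_le_one,
    integral_Ioc_eq_integral_Ioo, ofReal_integral_eq_lintegral_ofReal
      ((integrableOn_min_div_affineProfile hp).mono_set Ioo_subset_Icc_self)]
  filter_upwards [ae_restrict_mem measurableSet_Ioo] with s hs
  exact (min_div_affineProfile_mem_Icc hp (Ioo_subset_Icc_self hs)).1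

end AffineProfile

section Cdf

variable {μ : Measure ℝ} [IsProbabilityMeasure μ]

lemma hasDerivAt_cdf_of_eq_withDensity {f : ℝ → ℝ} (hf : Integrable f) (hf0 : 0 ≤ᵐ[volume] f)
    (hμ : μ = volume.withDensity fun x => ENNReal.ofReal (f x)) {x : ℝ} (hx : ContinuousAt f x) :
    HasDerivAt (cdf μ) (f x) x := by
  have hcdf (y : ℝ) : cdf μ y = ∫ z in Iic y, f z := by
    rw [cdf_eq_real, measureReal_def, hμ, withDensity_apply _ measurableSet_Iic,
      integral_eq_lintegral_of_nonneg_ae (ae_restrict_of_ae hf0) hf.integrableOn.1]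
  have hprimitive : ⇑(cdf μ) = fun y => cdf μ 0 + ∫ z in 0..y, f z := by
    ext y
    rw [← intervalIntegral.integral_Iic_sub_Iic hf.integrableOn hf.integrableOn, hcdf, hcdf,
      add_sub_cancel]
  rw [hprimitive]
  exact (intervalIntegral.integral_hasDerivAt_right hf.intervalIntegrable
    (hf.aestronglyMeasurable.stronglyMeasurableAtFilter) hx).const_add _

variable [NullSingletonClass μ]

lemma continuous_cdf : Continuous (cdf μ) := by
  refine continuous_iff_continuousAt.2 fun t => ?_
  rw [(monotone_cdf μ).continuousAt_iff_leftLim_eq_rightLim, (cdf μ).rightLim_eq]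
  have hsingleton := (cdf μ).measure_singleton t
  rw [measure_cdf, measure_singleton, eq_comm, ENNReal.ofReal_eq_zero] at hsingleton
  exact le_antisymm ((monotone_cdf μ).leftLim_le le_rfl) (by linarith)

lemma ofReal_one_sub_cdf (t : ℝ) : ENNReal.ofReal (1 - cdf μ t) = μ (Ici t) := by
  rw [← compl_Iio, prob_compl_eq_one_sub measurableSet_Iio, Iio_ae_eq_Iic.measure_eq,
    ← ofReal_cdf, ENNReal.ofReal_sub _ (cdf_nonneg μ t), ENNReal.ofReal_one]

lemma min_measure_Iic_measure_Ici (t : ℝ) :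
    min (μ (Iic t)) (μ (Ici t)) = ENNReal.ofReal (min (cdf μ t) (1 - cdf μ t)) := by
  rw [ENNReal.ofReal_min, ofReal_cdf, ofReal_one_sub_cdf]

end Cdf

section FirstMoment

lemma lintegral_ofReal_abs_sub (μ : Measure ℝ) [SFinite μ] (u : ℝ) :
    ∫⁻ x, ENNReal.ofReal |x - u| ∂μ = ∫⁻ t, μ {x | t ∈ uIcc u x} := by
  have hmeas : MeasurableSet {q : ℝ × ℝ | q.2 ∈ uIcc u q.1} := by
    simp only [uIcc, mem_Icc]
    measurability
  calc ∫⁻ x, ENNReal.ofReal |x - u| ∂μ = ∫⁻ x, volume {t | t ∈ uIcc u x} ∂μ := by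
        simp only [ofPred_mem_eq, Real.volume_interval]
    _ = (μ.prod volume) {q | q.2 ∈ uIcc u q.1} := (Measure.prod_apply hmeas).symm
    _ = ∫⁻ t, μ {x | t ∈ uIcc u x} := Measure.prod_apply_symm hmeas

lemma lintegral_min_measure_Iic_measure_Ici_le (μ : Measure ℝ) [SFinite μ] (u : ℝ) :
    ∫⁻ t, min (μ (Iic t)) (μ (Ici t)) ≤ ∫⁻ x, ENNReal.ofReal |x - u| ∂μ := by
  rw [lintegral_ofReal_abs_sub]
  refine lintegral_mono fun t => ?_
  rcases le_total t u with h | h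
  · exact min_le_of_left_le (measure_mono fun x hx => mem_uIcc.2 (.inr ⟨hx, h⟩))
  · exact min_le_of_right_le (measure_mono fun x hx => mem_uIcc.2 (.inl ⟨h, hx⟩))

lemma lintegral_ofReal_abs_sub_le_of_measure_Iic_eq (μ : Measure ℝ) [SFinite μ] {M : ℝ}
    (hM : μ (Iic M) = μ (Ici M)) :
    ∫⁻ x, ENNReal.ofReal |x - M| ∂μ ≤ ∫⁻ t, min (μ (Iic t)) (μ (Ici t)) := by
  rw [lintegral_ofReal_abs_sub]
  refine lintegral_mono_ae ?_
  filter_upwards [Measure.ae_ne volume M] with t ht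
  rcases ht.lt_or_gt with h | h
  · have hle : μ (Iic t) ≤ μ (Ici t) :=
      (measure_mono (Iic_subset_Iic.2 h.le)).trans
        (hM.trans_le (measure_mono (Ici_subset_Ici.2 h.le)))
    rw [min_eq_left hle]
    exact measure_mono fun x hx => ((mem_uIcc.1 hx).resolve_left fun h' => h'.1.not_gt h).1
  · have hle : μ (Ici t) ≤ μ (Iic t) :=
      (measure_mono (Ici_subset_Ici.2 h.le)).trans
        (hM.symm.trans_le (measure_mono (Iic_subset_Iic.2 h.le)))
    rw [min_eq_right hle]
    exact measure_mono fun x hx => ((mem_uIcc.1 hx).resolve_right fun h' => h'.2.not_gt h).2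

end FirstMoment

section Separation

lemma ofReal_le_volume_uIcc_diff {K₁ K₃ : Set ℝ} {ε : ℝ}
    (hsep : ∀ s ∈ K₁, ∀ t ∈ K₃, ε ≤ |s - t|) {x y : ℝ} (hx : x ∈ K₁) (hy : y ∈ K₃) :
    ENNReal.ofReal ε ≤ volume (uIcc x y \ (K₁ ∪ K₃)) := by
  let dist₁ : ℝ → ℝ := fun z => Metric.infDist z K₁
  have hfar : ∀ z ∈ K₃, ε ≤ dist₁ z := fun z hz =>
    (Metric.le_infDist ⟨x, hx⟩).2 fun s hs => by
      simpa [Real.dist_eq, abs_sub_comm] using hsep s hs z hz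
  have hzero : ∀ z ∈ K₁, dist₁ z = 0 := fun z hz => Metric.infDist_zero_of_mem hz
  have himage : Ioo 0 ε ⊆ dist₁ '' (uIcc x y \ (K₁ ∪ K₃)) := by
    intro r hr
    obtain ⟨z, hz, rfl⟩ := intermediate_value_uIcc
      (Metric.continuous_infDist_pt K₁).continuousOn
      (mem_uIcc.2 (.inl ⟨(hzero x hx).trans_le hr.1.le, hr.2.le.trans (hfar y hy)⟩))
    exact ⟨z, ⟨hz, not_or.2 ⟨fun h => hr.1.ne' (hzero z h), fun h => hr.2.not_ge (hfar z h)⟩⟩, rfl⟩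
  calc ENNReal.ofReal ε = volume (Ioo 0 ε) := by simp
    _ ≤ volume (dist₁ '' (uIcc x y \ (K₁ ∪ K₃))) := measure_mono himage
    _ ≤ volume (uIcc x y \ (K₁ ∪ K₃)) := by
      simpa [hausdorffMeasure_real] using
        (Metric.lipschitz_infDist_pt K₁).hausdorffMeasure_image_le zero_le_one
          (uIcc x y \ (K₁ ∪ K₃))

lemma prod_restrict_mem_uIcc_le (μ : Measure ℝ) [SFinite μ] {K₁ K₃ : Set ℝ}
    (hm₃ : MeasurableSet K₃) (hdisj : Disjoint K₁ K₃) (t : ℝ) :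
    (μ.restrict K₁).prod (μ.restrict K₃) {q | t ∈ uIcc q.1 q.2} ≤ μ (Iic t) * μ (Ici t) := by
  have hcover : {q : ℝ × ℝ | t ∈ uIcc q.1 q.2} ⊆ Iic t ×ˢ Ici t ∪ Ici t ×ˢ Iic t := by
    intro q hq
    simpa [mem_uIcc, and_comm] using hq
  have hsplit (S : Set ℝ) : μ.restrict K₁ S + μ.restrict K₃ S ≤ μ S := by
    rw [← Measure.add_apply, ← Measure.restrict_union hdisj hm₃]
    exact Measure.restrict_apply_le _ _
  calc (μ.restrict K₁).prod (μ.restrict K₃) {q | t ∈ uIcc q.1 q.2}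
      ≤ μ.restrict K₁ (Iic t) * μ.restrict K₃ (Ici t) +
          μ.restrict K₁ (Ici t) * μ.restrict K₃ (Iic t) := by
        refine (measure_mono hcover).trans ((measure_union_le _ _).trans ?_)
        rw [Measure.prod_prod, Measure.prod_prod]
    _ ≤ (μ.restrict K₁ (Iic t) + μ.restrict K₃ (Iic t)) *
          (μ.restrict K₁ (Ici t) + μ.restrict K₃ (Ici t)) := by
        rw [add_mul, mul_add, mul_add, mul_comm (μ.restrict K₁ (Ici t))]
        exact add_le_add le_add_self le_self_add
    _ ≤ μ (Iic t) * μ (Ici t) := mul_le_mul' (hsplit _) (hsplit _)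

-- Integrate, over pairs in `K₁ × K₃`, the length of the part of `K₂` between the two points.
lemma mul_measure_mul_measure_le_lintegral (μ : Measure ℝ) [SFinite μ] {K₁ K₂ K₃ : Set ℝ}
    (hm₁ : MeasurableSet K₁) (hm₃ : MeasurableSet K₃) (hdisj : Disjoint K₁ K₃) {c : ℝ≥0∞}
    (hgap : ∀ x ∈ K₁, ∀ y ∈ K₃, c ≤ volume (uIcc x y ∩ K₂)) :
    c * (μ K₁ * μ K₃) ≤ ∫⁻ t in K₂, μ (Iic t) * μ (Ici t) := by
  let ρ := (μ.restrict K₁).prod (μ.restrict K₃)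
  have hmeas : MeasurableSet {q : (ℝ × ℝ) × ℝ | q.2 ∈ uIcc q.1.1 q.1.2} := by
    simp only [uIcc, mem_Icc]
    measurability
  have hgap_ae : ∀ᵐ q ∂ρ, c ≤ volume.restrict K₂ (uIcc q.1 q.2) := by
    simp only [ρ, Measure.prod_restrict]
    filter_upwards [ae_restrict_mem (hm₁.prod hm₃)] with q hq
    rw [Measure.restrict_apply measurableSet_uIcc]
    exact hgap q.1 hq.1 q.2 hq.2
  calc c * (μ K₁ * μ K₃) = ∫⁻ _, c ∂ρ := by
        simp [ρ, ← univ_prod_univ]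
    _ ≤ ∫⁻ q, volume.restrict K₂ (uIcc q.1 q.2) ∂ρ := lintegral_mono_ae hgap_ae
    _ = (ρ.prod (volume.restrict K₂)) {q | q.2 ∈ uIcc q.1.1 q.1.2} :=
        (Measure.prod_apply hmeas).symm
    _ = ∫⁻ t in K₂, ρ {q | t ∈ uIcc q.1 q.2} := Measure.prod_apply_symm hmeas
    _ ≤ ∫⁻ t in K₂, μ (Iic t) * μ (Ici t) :=
        lintegral_mono fun t => prod_restrict_mem_uIcc_le μ hm₃ hdisj t

end Separation

section Tangent

variable {J : Set ℝ} {φ F : ℝ → ℝ}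

-- With `d` the right derivative of `φ` and `γ = d t`, the function `exp (-φ) + γ F` has right
-- derivative `(d t - d x) exp (-φ x)`, so it increases up to `t` and decreases afterwards.
lemma exists_exp_neg_le_sub_mul (hJ : IsOpen J) (hφ : ConvexOn ℝ J φ)
    (hF : ∀ x ∈ J, HasDerivAt F (exp (-φ x)) x) {t : ℝ} (ht : t ∈ J) :
    ∃ γ, ∀ x ∈ J, exp (-φ x) ≤ exp (-φ t) - γ * (F x - F t) := by
  let d : ℝ → ℝ := fun x => derivWithin φ (Ioi x) x
  let D : ℝ → ℝ := fun x => exp (-φ x) + d t * F x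
  have hmono : MonotoneOn d J := by simpa only [hJ.interior_eq] using hφ.monotoneOn_rightDeriv
  have hcont : ContinuousOn D J := (hφ.continuousOn hJ).neg.rexp.add <|
    continuousOn_const.mul fun x hx => (hF x hx).continuousAt.continuousWithinAt
  have hderiv : ∀ x ∈ J, HasDerivWithinAt D ((d t - d x) * exp (-φ x)) (Ici x) x := by
    intro x hx
    have hφx : HasDerivWithinAt φ (d x) (Ici x) x :=
      (hφ.hasDerivWithinAt_rightDeriv_of_mem_interior (hJ.interior_eq.symm ▸ hx)).Ici_of_Ioi
    exact (hφx.fun_neg.exp.fun_add ((hF x hx).hasDerivWithinAt.const_mul (d t))).congr_deriv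
      (by ring)
  suffices hmax : ∀ x ∈ J, D x ≤ D t from
    ⟨d t, fun x hx => by linarith only [show exp (-φ x) + _ ≤ exp (-φ t) + _ from hmax x hx]⟩
  intro x hx
  rcases le_total t x with h | h
  · have hsub : Icc t x ⊆ J := hφ.1.ordConnected.out ht hx
    refine image_le_of_deriv_right_le_deriv_boundary (hcont.mono hsub)
      (fun y hy => hderiv y (hsub (Ico_subset_Icc_self hy))) (B := fun _ => D t) (B' := fun _ => 0)
      le_rfl continuousOn_const
      (fun _ _ => hasDerivWithinAt_const _ _ _) (fun y hy => ?_) ⟨h, le_rfl⟩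
    have := hmono ht (hsub (Ico_subset_Icc_self hy)) hy.1
    exact mul_nonpos_of_nonpos_of_nonneg (by linarith) (exp_nonneg _)
  · have hsub : Icc x t ⊆ J := hφ.1.ordConnected.out hx ht
    refine image_le_of_deriv_right_le_deriv_boundary (f := fun _ => D x) (f' := fun _ => 0)
      continuousOn_const (fun _ _ => hasDerivWithinAt_const _ _ _) le_rfl (hcont.mono hsub)
      (fun y hy => hderiv y (hsub (Ico_subset_Icc_self hy))) (fun y hy => ?_) ⟨h, le_rfl⟩
    have := hmono (hsub (Ico_subset_Icc_self hy)) ht hy.2.le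
    exact mul_nonneg (by linarith) (exp_nonneg _)

end Tangent

/-- `μ` has the log-concave density `exp (-φ)` on the open interval `J`, and density `0` elsewhere.
Taking `J` open loses nothing, as endpoints are null, and makes `φ` continuous on `J`. -/
structure HasLogConcaveDensity (μ : Measure ℝ) (J : Set ℝ) (φ : ℝ → ℝ) : Prop where
  isOpen : IsOpen J
  convexOn : ConvexOn ℝ J φ
  eq_withDensity :
    μ = volume.withDensity fun x => ENNReal.ofReal (J.indicator (fun y => exp (-φ y)) x)

namespace HasLogConcaveDensity

variable {μ : Measure ℝ} {J : Set ℝ} {φ : ℝ → ℝ}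

lemma measure_eq (h : HasLogConcaveDensity μ J φ) (s : Set ℝ) :
    μ s = ∫⁻ x in s, ENNReal.ofReal (J.indicator (fun y => exp (-φ y)) x) := by
  rw [h.eq_withDensity, withDensity_apply']

lemma nullSingletonClass (h : HasLogConcaveDensity μ J φ) : NullSingletonClass μ :=
  h.eq_withDensity ▸ inferInstance

lemma measure_eq_zero_of_disjoint (h : HasLogConcaveDensity μ J φ) {s : Set ℝ}
    (hs : MeasurableSet s) (hsJ : Disjoint s J) : μ s = 0 := by
  rw [h.measure_eq]
  exact setLIntegral_eq_zero hs fun x hx => by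
    simp [indicator_of_notMem (hsJ.notMem_of_mem_left hx)]

lemma measure_Iic_eq_zero_or_measure_Ici_eq_zero (h : HasLogConcaveDensity μ J φ) {t : ℝ}
    (ht : t ∉ J) : μ (Iic t) = 0 ∨ μ (Ici t) = 0 := by
  by_contra! hne
  obtain ⟨a, hat, ha⟩ := not_disjoint_iff.1 fun hd =>
    hne.1 (h.measure_eq_zero_of_disjoint measurableSet_Iic hd)
  obtain ⟨b, hbt, hb⟩ := not_disjoint_iff.1 fun hd =>
    hne.2 (h.measure_eq_zero_of_disjoint measurableSet_Ici hd)
  exact ht (h.convexOn.1.ordConnected.out ha hb ⟨hat, hbt⟩)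

variable [IsProbabilityMeasure μ]

lemma integrable_density (h : HasLogConcaveDensity μ J φ) :
    Integrable (J.indicator fun x => exp (-φ x)) := by
  have hmeas : AEStronglyMeasurable (J.indicator fun x => exp (-φ x)) :=
    (aestronglyMeasurable_indicator_iff h.isOpen.measurableSet).2
      ((h.convexOn.continuousOn h.isOpen).neg.rexp.aestronglyMeasurable h.isOpen.measurableSet)
  refine (lintegral_ofReal_ne_top_iff_integrable hmeas
    (ae_of_all _ fun x => indicator_nonneg (fun _ _ => exp_nonneg _) x)).1 ?_
  rw [← setLIntegral_univ, ← h.measure_eq]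
  exact measure_ne_top μ univ

lemma hasDerivAt_cdf (h : HasLogConcaveDensity μ J φ) {x : ℝ} (hx : x ∈ J) :
    HasDerivAt (cdf μ) (exp (-φ x)) x := by
  have hcont : ContinuousAt (J.indicator fun x => exp (-φ x)) x := by
    refine ((h.convexOn.continuousOn h.isOpen).neg.rexp.continuousAt
      (h.isOpen.mem_nhds hx)).congr ?_
    exact eqOn_indicator.symm.eventuallyEq_of_mem (h.isOpen.mem_nhds hx)
  have hnonneg : 0 ≤ J.indicator fun x => exp (-φ x) :=
    indicator_nonneg fun _ _ => exp_nonneg _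
  simpa only [indicator_of_mem hx] using hasDerivAt_cdf_of_eq_withDensity h.integrable_density
    (ae_of_all _ hnonneg) h.eq_withDensity hcont

lemma Ioo_subset_image_cdf (h : HasLogConcaveDensity μ J φ) : Ioo 0 1 ⊆ cdf μ '' J := by
  intro w hw
  have := h.nullSingletonClass
  obtain ⟨x, rfl⟩ : w ∈ range (cdf μ) := mem_range_of_exists_le_of_exists_ge continuous_cdf
    ((tendsto_cdf_atBot μ).eventually (eventually_le_nhds hw.1)).exists
    ((tendsto_cdf_atTop μ).eventually (eventually_ge_nhds hw.2)).exists
  refine ⟨x, by_contra fun hx => ?_, rfl⟩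
  rcases h.measure_Iic_eq_zero_or_measure_Ici_eq_zero hx with h0 | h0
  · rw [← ofReal_cdf, ENNReal.ofReal_eq_zero] at h0
    exact h0.not_gt hw.1
  · rw [← ofReal_one_sub_cdf, ENNReal.ofReal_eq_zero] at h0
    linarith [hw.2]

lemma exists_affineProfile_tangent (h : HasLogConcaveDensity μ J φ) {t : ℝ} (ht : t ∈ J) :
    ∃ c > 0, ∃ p ∈ Icc (0 : ℝ) 1, exp (-φ t) = c * affineProfile p (cdf μ t) ∧
      ∀ x ∈ J, exp (-φ x) ≤ c * affineProfile p (cdf μ x) := by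
  obtain ⟨γ, hγ⟩ := exists_exp_neg_le_sub_mul h.isOpen h.convexOn (fun _ => h.hasDerivAt_cdf) ht
  let A := exp (-φ t) + γ * cdf μ t
  let B := exp (-φ t) - γ * (1 - cdf μ t)
  have hle : ∀ x ∈ J, exp (-φ x) ≤ A * (1 - cdf μ x) + B * cdf μ x := fun x hx =>
    (hγ x hx).trans_eq (by ring)
  have hnonneg : Icc 0 1 ⊆ {w | 0 ≤ A * (1 - w) + B * w} := by
    rw [← closure_Ioo zero_ne_one]
    refine (isClosed_le (by fun_prop) (by fun_prop)).closure_subset_iff.2 fun w hw => ?_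
    obtain ⟨x, hx, rfl⟩ := h.Ioo_subset_image_cdf hw
    exact (exp_nonneg _).trans (hle x hx)
  have hA : 0 ≤ A := by simpa using hnonneg (left_mem_Icc.2 zero_le_one)
  have hB : 0 ≤ B := by simpa using hnonneg (right_mem_Icc.2 zero_le_one)
  have hAB : 0 < A + B := by
    have hA' := mul_le_of_le_one_right hA (sub_le_self 1 (cdf_nonneg μ t))
    have hB' := mul_le_of_le_one_right hB (cdf_le_one μ t)
    linarith [exp_pos (-φ t), hle t ht]
  have hprofile (s : ℝ) : (A + B) * affineProfile (B / (A + B)) s = A * (1 - s) + B * s := by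
    simp only [affineProfile]
    field_simp
    ring
  refine ⟨A + B, hAB, B / (A + B), ⟨by positivity, (div_le_one hAB).2 (by linarith)⟩, ?_,
    fun x hx => (hle x hx).trans_eq (hprofile _).symm⟩
  rw [hprofile]
  ring

lemma two_mul_mul_min_cdf_le (h : HasLogConcaveDensity μ J φ) {M t : ℝ} (hM : M ∈ J)
    (hMcdf : cdf μ M = 1 / 2) (ht : t ∈ J) :
    2 * exp (-φ M) * min (cdf μ t) (1 - cdf μ t) ≤ exp (-φ t) := by
  obtain ⟨c, hc, p, hp, ht_eq, hle⟩ := h.exists_affineProfile_tangent ht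
  have hM_le : 2 * exp (-φ M) ≤ c := by
    have hhalf : affineProfile p (cdf μ M) = 1 / 2 := by
      rw [hMcdf]
      simp only [affineProfile]
      ring
    linarith [hhalf ▸ hle M hM]
  have hmin : 0 ≤ min (cdf μ t) (1 - cdf μ t) :=
    le_min (cdf_nonneg μ t) (sub_nonneg.2 (cdf_le_one μ t))
  rw [ht_eq]
  gcongr
  exact min_le_affineProfile hp

lemma lintegral_min_measure_lt_top (h : HasLogConcaveDensity μ J φ) {M : ℝ} (hM : M ∈ J)
    (hMcdf : cdf μ M = 1 / 2) : ∫⁻ t, min (μ (Iic t)) (μ (Ici t)) < ∞ := by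
  have := h.nullSingletonClass
  have hbound (t : ℝ) : ENNReal.ofReal (2 * exp (-φ M)) * min (μ (Iic t)) (μ (Ici t)) ≤
      ENNReal.ofReal (J.indicator (fun y => exp (-φ y)) t) := by
    by_cases ht : t ∈ J
    · rw [min_measure_Iic_measure_Ici, ← ENNReal.ofReal_mul (by positivity), indicator_of_mem ht]
      exact ENNReal.ofReal_le_ofReal (h.two_mul_mul_min_cdf_le hM hMcdf ht)
    · rcases h.measure_Iic_eq_zero_or_measure_Ici_eq_zero ht with h0 | h0 <;> simp [h0]
  have htotal : ENNReal.ofReal (2 * exp (-φ M)) * ∫⁻ t, min (μ (Iic t)) (μ (Ici t)) < ∞ := by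
    rw [← lintegral_const_mul' _ _ ENNReal.ofReal_ne_top]
    refine (lintegral_mono hbound).trans_lt ?_
    rw [← setLIntegral_univ, ← h.measure_eq]
    exact measure_lt_top μ univ
  exact ENNReal.lt_top_of_mul_ne_top_right htotal.ne (by simp [exp_pos])

lemma integrable_abs_sub (h : HasLogConcaveDensity μ J φ) (u : ℝ) :
    Integrable (fun x => |x - u|) μ := by
  have := h.nullSingletonClass
  obtain ⟨M, hM, hMcdf⟩ := h.Ioo_subset_image_cdf (show (1 / 2 : ℝ) ∈ Ioo 0 1 by norm_num)
  have hmedian : μ (Iic M) = μ (Ici M) := by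
    rw [← ofReal_cdf, ← ofReal_one_sub_cdf, hMcdf]
    norm_num
  have hfinite : ∫⁻ x, ENNReal.ofReal |x - M| ∂μ ≠ ∞ :=
    ((lintegral_ofReal_abs_sub_le_of_measure_Iic_eq μ hmedian).trans_lt
      (h.lintegral_min_measure_lt_top hM hMcdf)).ne
  have hint : Integrable (fun x => x - M) μ :=
    (integrable_norm_iff (by fun_prop)).1 <| (lintegral_ofReal_ne_top_iff_integrable (by fun_prop)
      (ae_of_all _ fun _ => norm_nonneg _)).1 hfinite
  simpa only [Pi.add_apply, sub_add_sub_cancel] using (hint.add (integrable_const (M - u))).abs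

lemma ofReal_affineProfileMoment_div_le (h : HasLogConcaveDensity μ J φ) {c p : ℝ} (hc : 0 < c)
    (hp : p ∈ Icc (0 : ℝ) 1) (hle : ∀ x ∈ J, exp (-φ x) ≤ c * affineProfile p (cdf μ x)) :
    ENNReal.ofReal (affineProfileMoment p / c) ≤ ∫⁻ t, min (μ (Iic t)) (μ (Ici t)) := by
  have := h.nullSingletonClass
  let r : ℝ → ℝ≥0∞ := fun s => ENNReal.ofReal (min s (1 - s) / affineProfile p s)
  have hpoint : ∀ x ∈ J, ENNReal.ofReal (exp (-φ x)) * r (cdf μ x) ≤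
      ENNReal.ofReal c * min (μ (Iic x)) (μ (Ici x)) := by
    intro x hx
    rw [min_measure_Iic_measure_Ici, ← ENNReal.ofReal_mul (exp_nonneg _),
      ← ENNReal.ofReal_mul hc.le]
    exact ENNReal.ofReal_le_ofReal (mul_min_div_affineProfile_le (exp_pos _) hc.le
      ⟨cdf_nonneg μ x, cdf_le_one μ x⟩ (hle x hx))
  rw [ENNReal.ofReal_div_of_pos hc, ← lintegral_min_div_affineProfile hp]
  refine ENNReal.div_le_of_le_mul' ?_
  calc ∫⁻ s in Ioo 0 1, r s ≤ ∫⁻ s in cdf μ '' J, r s := lintegral_mono_set h.Ioo_subset_image_cdf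
    _ = ∫⁻ x in J, ENNReal.ofReal (exp (-φ x)) * r (cdf μ x) :=
        lintegral_image_eq_lintegral_deriv_mul_of_monotoneOn h.isOpen.measurableSet
          (fun x hx => (h.hasDerivAt_cdf hx).hasDerivWithinAt) ((monotone_cdf μ).monotoneOn J) r
    _ ≤ ∫⁻ x in J, ENNReal.ofReal c * min (μ (Iic x)) (μ (Ici x)) :=
        setLIntegral_mono' h.isOpen.measurableSet hpoint
    _ ≤ ∫⁻ x, ENNReal.ofReal c * min (μ (Iic x)) (μ (Ici x)) := setLIntegral_le_lintegral _ _
    _ = ENNReal.ofReal c * ∫⁻ x, min (μ (Iic x)) (μ (Ici x)) :=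
        lintegral_const_mul' _ _ ENNReal.ofReal_ne_top

lemma log_two_mul_measure_Iic_mul_measure_Ici_le (h : HasLogConcaveDensity μ J φ) (u t : ℝ) :
    ENNReal.ofReal (log 2) * (μ (Iic t) * μ (Ici t)) ≤ (∫⁻ x, ENNReal.ofReal |x - u| ∂μ) *
      ENNReal.ofReal (J.indicator (fun y => exp (-φ y)) t) := by
  have := h.nullSingletonClass
  by_cases ht : t ∈ J
  swap
  · rcases h.measure_Iic_eq_zero_or_measure_Ici_eq_zero ht with h0 | h0 <;> simp [h0]
  obtain ⟨c, hc, p, hp, ht_eq, hle⟩ := h.exists_affineProfile_tangent ht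
  calc ENNReal.ofReal (log 2) * (μ (Iic t) * μ (Ici t))
      = ENNReal.ofReal (log 2 * (cdf μ t * (1 - cdf μ t))) := by
        rw [ENNReal.ofReal_mul (log_nonneg one_le_two), ENNReal.ofReal_mul (cdf_nonneg μ t),
          ofReal_cdf, ofReal_one_sub_cdf]
    _ ≤ ENNReal.ofReal (affineProfile p (cdf μ t) * affineProfileMoment p) :=
        ENNReal.ofReal_le_ofReal
          (log_two_mul_le_affineProfile_mul_moment hp ⟨cdf_nonneg μ t, cdf_le_one μ t⟩)
    _ = ENNReal.ofReal (affineProfileMoment p / c) * ENNReal.ofReal (exp (-φ t)) := by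
        rw [← ENNReal.ofReal_mul' (exp_nonneg _), ht_eq]
        field_simp
    _ ≤ (∫⁻ x, ENNReal.ofReal |x - u| ∂μ) *
          ENNReal.ofReal (J.indicator (fun y => exp (-φ y)) t) := by
        rw [indicator_of_mem ht]
        gcongr
        exact (h.ofReal_affineProfileMoment_div_le hc hp hle).trans
          (lintegral_min_measure_Iic_measure_Ici_le μ u)

variable {K₁ K₂ K₃ : Set ℝ} {ε : ℝ}

lemma ofReal_mul_log_two_mul_measure_mul_measure_le (h : HasLogConcaveDensity μ J φ)
    (hm₁ : MeasurableSet K₁) (hm₃ : MeasurableSet K₃)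
    (hconn : (K₁ ∪ K₂ ∪ K₃).OrdConnected) (hε : 0 < ε)
    (hsep : ∀ s ∈ K₁, ∀ t ∈ K₃, ε ≤ |s - t|) (u : ℝ) :
    ENNReal.ofReal (ε * log 2) * (μ K₁ * μ K₃) ≤ (∫⁻ x, ENNReal.ofReal |x - u| ∂μ) * μ K₂ := by
  have hdisj : Disjoint K₁ K₃ := disjoint_left.2 fun x hx₁ hx₃ => by
    simpa using hε.trans_le (hsep x hx₁ x hx₃)
  have hgap : ∀ x ∈ K₁, ∀ y ∈ K₃, ENNReal.ofReal ε ≤ volume (uIcc x y ∩ K₂) := by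
    intro x hx y hy
    refine (ofReal_le_volume_uIcc_diff hsep hx hy).trans (measure_mono fun z hz => ⟨hz.1, ?_⟩)
    have hz_mem := hconn.uIcc_subset (.inl (.inl hx)) (.inr hy) hz.1
    have hz_notMem := hz.2
    simp only [mem_union] at hz_mem hz_notMem
    tauto
  calc ENNReal.ofReal (ε * log 2) * (μ K₁ * μ K₃)
      = ENNReal.ofReal (log 2) * (ENNReal.ofReal ε * (μ K₁ * μ K₃)) := by
        rw [ENNReal.ofReal_mul hε.le, mul_left_comm (ENNReal.ofReal (log 2)), mul_assoc]
    _ ≤ ENNReal.ofReal (log 2) * ∫⁻ t in K₂, μ (Iic t) * μ (Ici t) := by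
        gcongr
        exact mul_measure_mul_measure_le_lintegral μ hm₁ hm₃ hdisj hgap
    _ = ∫⁻ t in K₂, ENNReal.ofReal (log 2) * (μ (Iic t) * μ (Ici t)) :=
        (lintegral_const_mul' _ _ ENNReal.ofReal_ne_top).symm
    _ ≤ ∫⁻ t in K₂, (∫⁻ x, ENNReal.ofReal |x - u| ∂μ) *
          ENNReal.ofReal (J.indicator (fun y => exp (-φ y)) t) :=
        lintegral_mono (h.log_two_mul_measure_Iic_mul_measure_Ici_le u)
    _ = (∫⁻ x, ENNReal.ofReal |x - u| ∂μ) * μ K₂ := by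
        rw [h.measure_eq, lintegral_const_mul']
        exact (h.integrable_abs_sub u).lintegral_lt_top.ne

theorem mul_log_two_mul_measureReal_mul_measureReal_le (h : HasLogConcaveDensity μ J φ)
    (hm₁ : MeasurableSet K₁) (hm₃ : MeasurableSet K₃)
    (hconn : (K₁ ∪ K₂ ∪ K₃).OrdConnected) (hε : 0 < ε)
    (hsep : ∀ s ∈ K₁, ∀ t ∈ K₃, ε ≤ |s - t|) (u : ℝ) :
    ε * log 2 * (μ.real K₁ * μ.real K₃) ≤ (∫ x, |x - u| ∂μ) * μ.real K₂ := by
  have hmoment : ENNReal.ofReal (∫ x, |x - u| ∂μ) = ∫⁻ x, ENNReal.ofReal |x - u| ∂μ :=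
    ofReal_integral_eq_lintegral_ofReal (h.integrable_abs_sub u) (ae_of_all _ fun _ => abs_nonneg _)
  have hmoment_nonneg : 0 ≤ ∫ x, |x - u| ∂μ := integral_nonneg fun _ => abs_nonneg _
  have hennreal := h.ofReal_mul_log_two_mul_measure_mul_measure_le hm₁ hm₃ hconn hε hsep u
  rw [← ofReal_measureReal (s := K₁), ← ofReal_measureReal (s := K₂),
    ← ofReal_measureReal (s := K₃), ← hmoment, ← ENNReal.ofReal_mul measureReal_nonneg,
    ← ENNReal.ofReal_mul (by positivity), ← ENNReal.ofReal_mul hmoment_nonneg] at hennreal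
  exact (ENNReal.ofReal_le_ofReal_iff (by positivity)).1 hennreal

end HasLogConcaveDensity

lemma hasLogConcaveDensity_tilted {I : Set ℝ} {ψ : ℝ → ℝ} (hψ : ConvexOn ℝ I ψ)
    (hpos : 0 < ∫ x in I, exp (-ψ x)) :
    HasLogConcaveDensity ((volume.restrict I).tilted fun x => -ψ x) (interior I)
      fun x => ψ x + log (∫ y in I, exp (-ψ y)) where
  isOpen := isOpen_interior
  convexOn := (hψ.subset interior_subset hψ.1.interior).add_const _
  eq_withDensity := by
    have hinterior : interior I =ᵐ[volume] I :=
      interior_ae_eq_of_null_frontier (hψ.1.addHaar_frontier volume)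
    rw [Measure.tilted, ← Measure.restrict_congr_set hinterior,
      ← withDensity_indicator measurableSet_interior]
    congr with x
    by_cases hx : x ∈ interior I
    · simp only [indicator_of_mem hx, neg_add, exp_add, exp_neg (log _), exp_log hpos,
        div_eq_mul_inv, Measure.restrict_congr_set hinterior]
    · simp [indicator_of_notMem hx]

theorem stmt_13_general {I : Set ℝ} {ψ : ℝ → ℝ} (hψ : ConvexOn ℝ I ψ)
    (hint : IntegrableOn (fun x => exp (-ψ x)) I) {K₁ K₂ K₃ : Set ℝ}
    (hm₁ : MeasurableSet K₁) (hm₃ : MeasurableSet K₃) (hcover : K₁ ∪ K₂ ∪ K₃ = I) {ε : ℝ}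
    (hε : 0 < ε) (hsep : ∀ s ∈ K₁, ∀ t ∈ K₃, ε ≤ |s - t|) (u : ℝ) :
    ε * log 2 * ((∫ x in K₁, exp (-ψ x)) * ∫ x in K₃, exp (-ψ x)) ≤
      (∫ x in I, |x - u| * exp (-ψ x)) * ∫ x in K₂, exp (-ψ x) := by
  rcases eq_or_ne (volume.restrict I) 0 with hnull | hne
  · have hK₁ : volume K₁ = 0 := measure_mono_null
      (subset_union_left.trans (subset_union_left.trans hcover.subset))
      (Measure.restrict_eq_zero.1 hnull)
    simp [hnull, setIntegral_measure_zero _ hK₁]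
  have := NeZero.mk hne
  have hpos : 0 < ∫ x in I, exp (-ψ x) := integral_exp_pos hint
  let ν := (volume.restrict I).tilted fun x => -ψ x
  have : IsProbabilityMeasure ν := isProbabilityMeasure_tilted hint
  have hreal {S : Set ℝ} (hS : S ⊆ I) :
      ν.real S = (∫ x in S, exp (-ψ x)) / ∫ x in I, exp (-ψ x) := by
    rw [measureReal_def, tilted_apply_eq_ofReal_integral, Measure.restrict_restrict_of_subset hS,
      integral_div, ENNReal.toReal_ofReal (by positivity)]
  have hmoment : ∫ x, |x - u| ∂ν =
      (∫ x in I, |x - u| * exp (-ψ x)) / ∫ x in I, exp (-ψ x) := by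
    rw [integral_tilted, ← integral_div]
    congr with x
    rw [smul_eq_mul]
    ring
  have hiso := (hasLogConcaveDensity_tilted hψ hpos).mul_log_two_mul_measureReal_mul_measureReal_le
    hm₁ hm₃ (hcover ▸ hψ.1.ordConnected) hε hsep u
  have hK₁ : K₁ ⊆ I := by grind
  have hK₂ : K₂ ⊆ I := by grind
  have hK₃ : K₃ ⊆ I := by grind
  rw [hmoment, hreal hK₁, hreal hK₂, hreal hK₃] at hiso
  field_simp at hiso
  linarith

/-- One-dimensional needle form of the KLS isoperimetric inequality: for a probability
measure with log-concave density proportional to `e^{-ψ}` on an interval `I`, and a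
measurable partition `K₁ ∪ K₂ ∪ K₃ = I` with `dist(K₁,K₃) ≥ ε`,
`(m/(ε log 2))·μ(K₂) ≥ μ(K₁)·μ(K₃)` where `m = ∫ |x - u| dμ`. -/
theorem stmt_13 (I : Set ℝ) (hI : Convex ℝ I) (hImeas : MeasurableSet I)
    (ψ : ℝ → ℝ) (hψ : ConvexOn ℝ I ψ)
    (hint : IntegrableOn (fun x => Real.exp (-ψ x)) I)
    (Ztot : ℝ) (hZ : Ztot = ∫ x in I, Real.exp (-ψ x)) (hZpos : 0 < Ztot)
    (μS : Set ℝ → ℝ) (hμS : ∀ S : Set ℝ, μS S = (∫ x in S, Real.exp (-ψ x)) / Ztot)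
    (K₁ K₂ K₃ : Set ℝ)
    (hm₁ : MeasurableSet K₁) (hm₂ : MeasurableSet K₂) (hm₃ : MeasurableSet K₃)
    (hd₁₂ : Disjoint K₁ K₂) (hd₂₃ : Disjoint K₂ K₃) (hd₁₃ : Disjoint K₁ K₃)
    (hcover : K₁ ∪ K₂ ∪ K₃ = I)
    (ε : ℝ) (hε : 0 < ε)
    (hsep : ∀ s ∈ K₁, ∀ t ∈ K₃, ε ≤ |s - t|)
    (u : ℝ) (hu : u ∈ I)
    (m : ℝ) (hm : m = (∫ x in I, |x - u| * Real.exp (-ψ x)) / Ztot) :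
    (m / (ε * Real.log 2)) * μS K₂ ≥ μS K₁ * μS K₃ := by
  rw [ge_iff_le, hm, hμS, hμS, hμS]
  field_simp
  linarith [stmt_13_general hψ hint hm₁ hm₃ hcover hε hsep u]
end
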